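/- arXiv:2206.13466 — 3 statements merged into one kernel-verified Lean document; each statement's English description precedes it below -/
import Mathlib

section
/- Let f be a monic squarefree polynomial over ℤ with splitting field L, Galois group G, and roots α_1, ..., α_n, and set H_i = Gal(L/ℚ(α_i)). If there exists σ ∈ G fixing no root of f (i.e., G ≠ ⋃_i H_i), then there are infinitely many primes p such that f mod p has no root in 𝔽_p. -/
open Polynomial

/-!
This is Frobenius' argument. Let `f` split in the Galois number field `L`, and for `d ∣ orderOf σ`
let `K_d` be the fixed field of `⟨σ ^ d⟩`. Let `p` be unramified in `L`, with Frobenius `g`. The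
number of ideals of norm `p` in `K_d`, times the order of `⟨σ ^ d⟩`, counts the `τ` with
`τ g τ⁻¹ ∈ ⟨σ ^ d⟩`. By Möbius inversion, a fixed linear combination of these numbers therefore
counts the `τ` such that `τ g τ⁻¹` generates `⟨σ⟩`. The ideals of norm `p` in `K_d` are the
coefficient at `p` of the Dedekind zeta function of `K_d`, whose simple pole at `1` makes
`∑ₚ #{ideals of norm p} p⁻ˢ` grow like `-log (s - 1)`; the coefficients of the linear combination
have a nonzero sum, so the combination is nonzero for infinitely many `p`. For these `p` some prime
`Q` above `p` has decomposition group `⟨σ⟩`. If `f` had a root `a` modulo `p`, the root of `f` in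
`L` that is congruent to `a` modulo `Q`, unique for all but finitely many `p`, would be fixed
by `σ`.
-/

section EulerProduct

theorem summable_add_pow_mul_half_pow (N : ℕ) :
    Summable fun k : ℕ ↦ ((k : ℝ) + 3) ^ N * (1 / 2 : ℝ) ^ k := by
  have h := summable_pow_mul_geometric_of_norm_lt_one (R := ℝ) N (r := 1 / 2) (by norm_num)
  refine (((summable_nat_add_iff 3).2 h).mul_left 8).congr fun k ↦ ?_
  push_cast
  ring

theorem abs_log_one_add_add_sub_le {a t : ℝ} (ha : 0 ≤ a) (ht : 0 ≤ t) :
    |Real.log (1 + a + t) - a| ≤ t + (a + t) ^ 2 := by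
  have hx : 0 ≤ a + t := by positivity
  have hupper := Real.log_le_sub_one_of_pos (by positivity : 0 < 1 + a + t)
  have hlower := Real.le_log_one_add_of_nonneg hx
  have hquad : a + t - (a + t) ^ 2 ≤ 2 * (a + t) / (a + t + 2) := by
    rw [le_div_iff₀ (by positivity)]
    nlinarith [pow_nonneg hx 3, sq_nonneg (a + t)]
  rw [← add_assoc] at hlower
  rw [abs_le]
  constructor <;> nlinarith [sq_nonneg (a + t)]

theorem exists_forall_abs_log_tsum_sub_le (N : ℕ) :
    ∃ B : ℝ, ∀ x : ℝ, 2 ≤ x → ∀ u : ℕ → ℝ, u 0 = 1 → (∀ k, 0 ≤ u k) →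
      (∀ k, u k ≤ ((k : ℝ) + 1) ^ N / x ^ k) → |Real.log (∑' k, u k) - u 1| ≤ B / x ^ 2 := by
  set A : ℝ := ∑' k : ℕ, ((k : ℝ) + 3) ^ N * (1 / 2 : ℝ) ^ k
  refine ⟨A + (2 ^ N + A) ^ 2, fun x hx u hu0 hu hle ↦ ?_⟩
  have hterm (k : ℕ) : u (k + 2) ≤ ((k : ℝ) + 3) ^ N * (1 / 2 : ℝ) ^ k / x ^ 2 := by
    refine (hle (k + 2)).trans ?_
    rw [pow_add x, ← div_div, one_div, inv_pow, ← div_eq_mul_inv]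
    push_cast
    rw [add_assoc (k : ℝ)]
    norm_num
    gcongr
  have hmajorant := (summable_add_pow_mul_half_pow N).div_const (x ^ 2)
  have htail : Summable fun k ↦ u (k + 2) := .of_nonneg_of_le (fun k ↦ hu _) hterm hmajorant
  have htail_nonneg : 0 ≤ ∑' k, u (k + 2) := tsum_nonneg fun k ↦ hu _
  have htail_le : ∑' k, u (k + 2) ≤ A / x ^ 2 := by
    rw [← tsum_div_const]
    exact htail.tsum_le_tsum hterm hmajorant
  have hsplit : ∑' k, u k = 1 + u 1 + ∑' k, u (k + 2) := by
    rw [← ((summable_nat_add_iff 2).1 htail).sum_add_tsum_nat_add 2, Finset.sum_range_succ,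
      Finset.sum_range_one, hu0]
  have _ : 0 ≤ A := tsum_nonneg fun k ↦ by positivity
  have hhead : u 1 + ∑' k, u (k + 2) ≤ (2 ^ N + A) / x := by
    have h1 : u 1 ≤ 2 ^ N / x := (hle 1).trans_eq (by norm_num)
    have h2 : A / x ^ 2 ≤ A / x := by
      gcongr
      exact le_self_pow₀ (by linarith) two_ne_zero
    rw [add_div]
    linarith
  calc |Real.log (∑' k, u k) - u 1|
      ≤ ∑' k, u (k + 2) + (u 1 + ∑' k, u (k + 2)) ^ 2 := by
        rw [hsplit]
        exact abs_log_one_add_add_sub_le (hu 1) htail_nonneg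
    _ ≤ A / x ^ 2 + ((2 ^ N + A) / x) ^ 2 := by
        gcongr
        exact add_nonneg (hu 1) htail_nonneg
    _ = (A + (2 ^ N + A) ^ 2) / x ^ 2 := by ring

theorem exists_forall_abs_log_tsum_sub_tsum_primes_le (N : ℕ) :
    ∃ C : ℝ, ∀ g : ℕ → ℝ, g 0 = 0 → g 1 = 1 →
      (∀ {m n : ℕ}, m.Coprime n → g (m * n) = g m * g n) → (∀ n, 0 ≤ g n) → Summable g →
      (∀ p k : ℕ, p.Prime → g (p ^ k) ≤ ((k : ℝ) + 1) ^ N / (p : ℝ) ^ k) →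
      |Real.log (∑' n, g n) - ∑' p : Nat.Primes, g p| ≤ C := by
  obtain ⟨B, hB⟩ := exists_forall_abs_log_tsum_sub_le N
  refine ⟨∑' p : Nat.Primes, B / (p : ℝ) ^ 2, fun g hg0 hg1 hmul hnonneg hsum hle ↦ ?_⟩
  have hlocal (p : Nat.Primes) : |Real.log (∑' k, g (p ^ k)) - g p| ≤ B / (p : ℝ) ^ 2 := by
    simpa using hB p (mod_cast p.2.two_le) (fun k ↦ g (p ^ k)) (by simpa) (fun k ↦ hnonneg _)
      (fun k ↦ hle p k p.2)
  have hmajorant : Summable fun p : Nat.Primes ↦ B / (p : ℝ) ^ 2 := by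
    simp_rw [div_eq_mul_inv]
    exact ((Real.summable_nat_pow_inv.2 one_lt_two).comp_injective
      Nat.Primes.coe_nat_injective).mul_left B
  have hprimes : Summable fun p : Nat.Primes ↦ g p :=
    hsum.comp_injective Nat.Primes.coe_nat_injective
  have hdiff : Summable fun p : Nat.Primes ↦ Real.log (∑' k, g (p ^ k)) - g p :=
    .of_norm_bounded hmajorant hlocal
  have hlog : Summable fun p : Nat.Primes ↦ Real.log (∑' k, g (p ^ k)) := by
    simpa using hdiff.add hprimes
  have hpos (p : Nat.Primes) : 0 < ∑' k, g (p ^ k) :=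
    (hsum.comp_injective (Nat.pow_right_injective p.2.two_le)).tsum_pos (fun k ↦ hnonneg _) 0
      (by simp [hg1])
  have heuler : ∏' p : Nat.Primes, ∑' k, g (p ^ k) = ∑' n, g n :=
    EulerProduct.eulerProduct_tprod hg1 hmul hsum.norm hg0
  rw [← heuler, ← Real.rexp_tsum_eq_tprod hpos hlog, Real.log_exp, ← hlog.tsum_sub hprimes]
  exact tsum_of_norm_bounded (f := fun p : Nat.Primes ↦ Real.log (∑' k, g (p ^ k)) - g p)
    hmajorant.hasSum hlocal

end EulerProduct

section IdealCount

open Ideal UniqueFactorizationMonoid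

theorem multiset_card_Iic_nsmul_le {α : Type*} [DecidableEq α] (s : Multiset α) (k : ℕ) :
    (Finset.Iic (k • s)).card ≤ (k + 1) ^ s.card := by
  calc (Finset.Iic (k • s)).card
      = ∏ a ∈ (k • s).toFinset, (k * s.count a + 1) := by simp [Multiset.card_Iic]
    _ ≤ ∏ a ∈ s.toFinset, (k * s.count a + 1) :=
        Finset.prod_le_prod_of_subset_of_one_le' (fun a ↦ by simp)
          fun _ _ _ ↦ Nat.le_add_left _ _
    _ ≤ ∏ a ∈ s.toFinset, (k + 1) ^ s.count a :=
        Finset.prod_le_prod' fun a _ ↦ by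
          simpa [add_comm, mul_comm] using
            one_add_le_pow_of_two_add_nonneg (Nat.zero_le (2 + k)) (s.count a)
    _ = (k + 1) ^ s.card := by
        rw [Finset.prod_pow_eq_pow_sum, Multiset.toFinset_sum_count_eq]

theorem finite_setOf_dvd_pow_and_ncard_le {α : Type*} [CommMonoidWithZero α]
    [NormalizationMonoid α] [UniqueFactorizationMonoid α] [Subsingleton αˣ] {a : α} (ha : a ≠ 0)
    (k : ℕ) :
    {b | b ∣ a ^ k}.Finite ∧ {b | b ∣ a ^ k}.ncard ≤ (k + 1) ^ (normalizedFactors a).card := by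
  classical
  have : Nontrivial α := ⟨a, 0, ha⟩
  have hne {b : α} (hb : b ∣ a ^ k) : b ≠ 0 := ne_zero_of_dvd_ne_zero (pow_ne_zero k ha) hb
  have hmaps : Set.MapsTo normalizedFactors {b | b ∣ a ^ k}
      (Finset.Iic (k • normalizedFactors a)) := fun b hb ↦ by
    rw [Finset.coe_Iic, Set.mem_Iic, ← normalizedFactors_pow]
    exact (dvd_iff_normalizedFactors_le_normalizedFactors (hne hb) (pow_ne_zero k ha)).1 hb
  have hinj : Set.InjOn normalizedFactors {b | b ∣ a ^ k} := fun b hb c hc h ↦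
    associated_iff_eq.1
      ((associated_iff_normalizedFactors_eq_normalizedFactors (hne hb) (hne hc)).2 h)
  refine ⟨.of_injOn hmaps hinj (Finset.finite_toSet _), ?_⟩
  refine (Set.ncard_le_ncard_of_injOn _ hmaps hinj (Finset.finite_toSet _)).trans ?_
  rw [Set.ncard_coe_finset]
  exact multiset_card_Iic_nsmul_le _ _

variable (S : Type*) [CommRing S] [IsDedekindDomain S] [Module.Free ℤ S]

/-- The number of ideals of norm `n`. For the ring of integers of a number field this is the
`n`-th coefficient of the Dedekind zeta function. -/
noncomputable def idealCount (n : ℕ) : ℕ :=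
  Nat.card {I : Ideal S // absNorm I = n}

variable {S}

theorem isCoprime_of_coprime_absNorm {I J : Ideal S} (h : (absNorm I).Coprime (absNorm J)) :
    IsCoprime I J := by
  rw [Ideal.isCoprime_iff_sup_eq, ← absNorm_eq_one_iff]
  exact Nat.eq_one_of_dvd_coprimes h (absNorm_dvd_absNorm_of_le le_sup_left)
    (absNorm_dvd_absNorm_of_le le_sup_right)

theorem dvd_of_mul_eq_mul_of_coprime_absNorm {I J I' J' : Ideal S}
    (h : (absNorm I).Coprime (absNorm J')) (hmul : I * J = I' * J') : I ∣ I' :=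
  (isCoprime_of_coprime_absNorm h).dvd_of_dvd_mul_right (Dvd.intro _ hmul)

theorem idealCount_one : idealCount S 1 = 1 := by
  rw [idealCount, Nat.card_eq_one_iff_unique]
  refine ⟨⟨fun I J ↦ Subtype.ext ?_⟩, ⟨⟨⊤, absNorm_top⟩⟩⟩
  rw [absNorm_eq_one_iff.1 I.2, absNorm_eq_one_iff.1 J.2]

variable [Module.Finite ℤ S]

theorem exists_mul_eq_of_absNorm_eq_mul {m n : ℕ} (h : m.Coprime n) {A : Ideal S}
    (hA : absNorm A = m * n) : ∃ I J, absNorm I = m ∧ absNorm J = n ∧ I * J = A := by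
  have hdvd : A ∣ span {(m : S)} * span {(n : S)} := by
    rw [span_singleton_mul_span_singleton, dvd_span_singleton, ← Nat.cast_mul, ← hA]
    exact absNorm_mem A
  obtain ⟨I, J, hI, hJ, rfl⟩ := exists_dvd_and_dvd_of_dvd_mul hdvd
  have hIn : (absNorm I).Coprime n :=
    (h.pow_left _).coprime_dvd_left (absNorm_span_natCast (S := S) m ▸ map_dvd absNorm hI)
  have hJm : (absNorm J).Coprime m :=
    (h.symm.pow_left _).coprime_dvd_left (absNorm_span_natCast (S := S) n ▸ map_dvd absNorm hJ)
  rw [map_mul] at hA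
  exact ⟨I, J,
    dvd_antisymm (hIn.dvd_of_dvd_mul_right (Dvd.intro _ hA))
      (hJm.symm.dvd_of_dvd_mul_right (hA ▸ dvd_mul_right m n)),
    dvd_antisymm (hJm.dvd_of_dvd_mul_left (Dvd.intro_left _ hA))
      (hIn.symm.dvd_of_dvd_mul_left (hA ▸ dvd_mul_left n m)), rfl⟩

theorem idealCount_mul {m n : ℕ} (h : m.Coprime n) :
    idealCount S (m * n) = idealCount S m * idealCount S n := by
  rw [idealCount, idealCount, idealCount, ← Nat.card_prod]
  refine (Nat.card_congr <| .ofBijective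
    (fun x ↦ ⟨x.1.1 * x.2.1, by rw [map_mul, x.1.2, x.2.2]⟩) ⟨?_, ?_⟩).symm
  · rintro ⟨⟨I, hI⟩, J, hJ⟩ ⟨⟨I', hI'⟩, J', hJ'⟩ heq
    have hmul : I * J = I' * J' := congrArg Subtype.val heq
    have hmul' : J * I = J' * I' := by rw [mul_comm J, hmul, mul_comm]
    obtain rfl : I = I' := dvd_antisymm
      (dvd_of_mul_eq_mul_of_coprime_absNorm (by rwa [hI, hJ']) hmul)
      (dvd_of_mul_eq_mul_of_coprime_absNorm (by rwa [hI', hJ]) hmul.symm)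
    obtain rfl : J = J' := dvd_antisymm
      (dvd_of_mul_eq_mul_of_coprime_absNorm (by rwa [hJ, hI, Nat.coprime_comm]) hmul')
      (dvd_of_mul_eq_mul_of_coprime_absNorm (by rwa [hJ', hI, Nat.coprime_comm]) hmul'.symm)
    rfl
  · rintro ⟨A, hA⟩
    obtain ⟨I, J, hI, hJ, rfl⟩ := exists_mul_eq_of_absNorm_eq_mul h hA
    exact ⟨⟨⟨I, hI⟩, J, hJ⟩, rfl⟩

theorem span_natCast_ne_zero {n : ℕ} (hn : n ≠ 0) : span {(n : S)} ≠ 0 := fun h ↦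
  pow_ne_zero (Module.finrank ℤ S) hn <| by
    rw [← absNorm_span_natCast (S := S), h, Ideal.zero_eq_bot, absNorm_bot]

theorem card_normalizedFactors_span_natCast_le {p : ℕ} (hp : p.Prime) :
    (normalizedFactors (span {(p : S)})).card ≤ Module.finrank ℤ S := by
  set M := normalizedFactors (span {(p : S)})
  have hprod : (M.map absNorm).prod = p ^ Module.finrank ℤ S := by
    rw [← absNorm_span_natCast, ← map_multiset_prod absNorm,
      associated_iff_eq.1 (prod_normalizedFactors (span_natCast_ne_zero hp.ne_zero))]
  have hle : ∀ n ∈ M.map absNorm, p ≤ n := by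
    intro n hn
    obtain ⟨j, -, rfl⟩ := (Nat.dvd_prime_pow hp).1 (hprod ▸ Multiset.dvd_prod hn)
    obtain ⟨P, hP, hj⟩ := Multiset.mem_map.1 hn
    refine Nat.le_self_pow (fun hj0 ↦ ?_) p
    rw [hj0, pow_zero, absNorm_eq_one_iff, ← Ideal.isUnit_iff] at hj
    exact (prime_of_normalized_factor P hP).not_isUnit hj
  rw [← Nat.pow_le_pow_iff_right hp.one_lt, ← hprod]
  simpa using Multiset.pow_card_le_prod hle

theorem idealCount_prime_pow_le {p : ℕ} (hp : p.Prime) (k : ℕ) :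
    idealCount S (p ^ k) ≤ (k + 1) ^ Module.finrank ℤ S := by
  obtain ⟨hfin, hcard⟩ :=
    finite_setOf_dvd_pow_and_ncard_le (span_natCast_ne_zero (S := S) hp.ne_zero) k
  have hsub : {I : Ideal S | absNorm I = p ^ k} ⊆ {I | I ∣ span {(p : S)} ^ k} := fun I hI ↦ by
    rw [Set.mem_ofPred_eq, span_singleton_pow, dvd_span_singleton, ← Nat.cast_pow, ← hI]
    exact absNorm_mem I
  calc idealCount S (p ^ k) = {I : Ideal S | absNorm I = p ^ k}.ncard := rfl
    _ ≤ {I : Ideal S | I ∣ span {(p : S)} ^ k}.ncard := Set.ncard_le_ncard hsub hfin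
    _ ≤ (k + 1) ^ (normalizedFactors (span {(p : S)})).card := hcard
    _ ≤ (k + 1) ^ Module.finrank ℤ S :=
        Nat.pow_le_pow_right k.succ_pos (card_normalizedFactors_span_natCast_le hp)

end IdealCount

section ZetaAsymptotics

open Asymptotics Filter NumberField Topology

variable (K : Type*) [Field K] [NumberField K]

/-- The `n`-th term of the Dedekind zeta series of `K` at a real point `s`. The zero ideal is
harmless: for `s ≠ 0` the term at `n = 0` vanishes because `0 ^ (-s) = 0`. -/
noncomputable def zetaTerm (s : ℝ) (n : ℕ) : ℝ :=
  idealCount (𝓞 K) n * (n : ℝ) ^ (-s)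

theorem zetaTerm_nonneg (s : ℝ) (n : ℕ) : 0 ≤ zetaTerm K s n := by
  unfold zetaTerm
  positivity

theorem zetaTerm_zero {s : ℝ} (hs : s ≠ 0) : zetaTerm K s 0 = 0 := by
  simp [zetaTerm, Real.zero_rpow (neg_ne_zero.2 hs)]

theorem zetaTerm_one (s : ℝ) : zetaTerm K s 1 = 1 := by
  simp [zetaTerm, idealCount_one]

theorem zetaTerm_mul (s : ℝ) {m n : ℕ} (h : m.Coprime n) :
    zetaTerm K s (m * n) = zetaTerm K s m * zetaTerm K s n := by
  simp only [zetaTerm, idealCount_mul h, Nat.cast_mul,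
    Real.mul_rpow (Nat.cast_nonneg m) (Nat.cast_nonneg n)]
  ring

theorem zetaTerm_prime_pow_le {s : ℝ} (hs : 1 ≤ s) {p : ℕ} (hp : p.Prime) (k : ℕ) :
    zetaTerm K s (p ^ k) ≤ ((k : ℝ) + 1) ^ Module.finrank ℤ (𝓞 K) / (p : ℝ) ^ k := by
  have hpow : ((p ^ k : ℕ) : ℝ) ^ (-s) ≤ ((p : ℝ) ^ k)⁻¹ := by
    rw [← Nat.cast_pow, ← Real.rpow_neg_one]
    exact Real.rpow_le_rpow_of_exponent_le (mod_cast Nat.one_le_pow _ _ hp.pos) (neg_le_neg hs)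
  rw [zetaTerm, div_eq_mul_inv]
  gcongr
  exact_mod_cast idealCount_prime_pow_le (S := 𝓞 K) hp k

theorem dedekindZeta_ofReal {s : ℝ} (hs : s ≠ 0) :
    dedekindZeta K s = ((∑' n, zetaTerm K s n : ℝ) : ℂ) := by
  rw [dedekindZeta, LSeries, Complex.ofReal_tsum]
  refine tsum_congr fun n ↦ ?_
  rcases eq_or_ne n 0 with rfl | hn
  · simp [zetaTerm_zero K hs]
  · rw [LSeries.term_of_ne_zero hn, zetaTerm, idealCount, Complex.ofReal_mul,
      Complex.ofReal_cpow n.cast_nonneg, Complex.ofReal_neg, Complex.cpow_neg, div_eq_mul_inv]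
    simp

theorem tendsto_sub_one_mul_tsum_zetaTerm :
    Tendsto (fun s ↦ (s - 1) * ∑' n, zetaTerm K s n) (𝓝[>] 1) (𝓝 (dedekindZeta_residue K)) := by
  refine ((Complex.continuous_re.tendsto _).comp
    (tendsto_sub_one_mul_dedekindZeta_nhdsGT K)).congr' ?_
  filter_upwards [self_mem_nhdsWithin] with s hs
  rw [Function.comp_apply, dedekindZeta_ofReal K (zero_lt_one.trans hs).ne',
    ← Complex.ofReal_one, ← Complex.ofReal_sub, ← Complex.ofReal_mul, Complex.ofReal_re]

theorem eventually_tsum_zetaTerm_ne_zero : ∀ᶠ s in 𝓝[>] 1, ∑' n, zetaTerm K s n ≠ 0 :=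
  ((tendsto_sub_one_mul_tsum_zetaTerm K).eventually_ne (dedekindZeta_residue_ne_zero K)).mono
    fun _ ↦ right_ne_zero_of_mul

-- The sum of a divergent series is `0` by convention, so a nonzero sum proves convergence.
theorem eventually_summable_zetaTerm : ∀ᶠ s in 𝓝[>] 1, Summable (zetaTerm K s) :=
  (eventually_tsum_zetaTerm_ne_zero K).mono fun _ ↦ not_imp_comm.1 tsum_eq_zero_of_not_summable

theorem isBigO_log_tsum_zetaTerm_sub_tsum_primes :
    (fun s ↦ Real.log (∑' n, zetaTerm K s n) - ∑' p : Nat.Primes, zetaTerm K s p)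
      =O[𝓝[>] 1] (fun _ ↦ (1 : ℝ)) := by
  obtain ⟨C, hC⟩ := exists_forall_abs_log_tsum_sub_tsum_primes_le (Module.finrank ℤ (𝓞 K))
  refine .of_bound C ?_
  filter_upwards [eventually_summable_zetaTerm K, self_mem_nhdsWithin] with s hsum hs
  rw [norm_one, mul_one, Real.norm_eq_abs]
  exact hC _ (zetaTerm_zero K (zero_lt_one.trans hs).ne') (zetaTerm_one K s) (zetaTerm_mul K s)
    (zetaTerm_nonneg K s) hsum fun p k hp ↦ zetaTerm_prime_pow_le K (le_of_lt hs) hp k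

theorem isBigO_tsum_primes_zetaTerm_add_log :
    (fun s ↦ ∑' p : Nat.Primes, zetaTerm K s p + Real.log (s - 1))
      =O[𝓝[>] 1] (fun _ ↦ (1 : ℝ)) := by
  have hresidue : (fun s ↦ Real.log ((s - 1) * ∑' n, zetaTerm K s n))
      =O[𝓝[>] 1] (fun _ ↦ (1 : ℝ)) :=
    ((tendsto_sub_one_mul_tsum_zetaTerm K).log (dedekindZeta_residue_ne_zero K)).isBigO_one ℝ
  refine (hresidue.sub (isBigO_log_tsum_zetaTerm_sub_tsum_primes K)).congr' ?_ .rfl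
  filter_upwards [eventually_tsum_zetaTerm_ne_zero K, self_mem_nhdsWithin] with s hne hs
  rw [Real.log_mul (sub_ne_zero.2 (ne_of_gt hs)) hne]
  ring

theorem not_isBigO_log_sub_one :
    ¬ (fun s : ℝ ↦ Real.log (s - 1)) =O[𝓝[>] 1] (fun _ ↦ (1 : ℝ)) := by
  have hsub : Tendsto (fun s : ℝ ↦ s - 1) (𝓝[>] 1) (𝓝[>] 0) := by
    refine tendsto_nhdsWithin_iff.2 ⟨?_, ?_⟩
    · simpa using ((continuous_sub_right (1 : ℝ)).tendsto 1).mono_left nhdsWithin_le_nhds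
    · filter_upwards [self_mem_nhdsWithin] with s hs using sub_pos.2 (Set.mem_Ioi.1 hs)
  have hlog := tendsto_abs_atBot_atTop.comp (Real.tendsto_log_nhdsGT_zero.comp hsub)
  exact fun h ↦ not_isBoundedUnder_of_tendsto_atTop hlog (isBigO_one_iff ℝ |>.1 h)

theorem sum_mul_tsum_primes_zetaTerm {ι : Type*} {T : Finset ι} (K : ι → Type*)
    [∀ i, Field (K i)] [∀ i, NumberField (K i)] (w : ι → ℝ) {s : ℝ}
    (hsum : ∀ i ∈ T, Summable (zetaTerm (K i) s)) :
    ∑ i ∈ T, w i * ∑' p : Nat.Primes, zetaTerm (K i) s p =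
      ∑' p : Nat.Primes, (∑ i ∈ T, w i * idealCount (𝓞 (K i)) p) * (p : ℝ) ^ (-s) := by
  have hprimes (i : ι) (hi : i ∈ T) : Summable fun p : Nat.Primes ↦ w i * zetaTerm (K i) s p :=
    ((hsum i hi).comp_injective Nat.Primes.coe_nat_injective).mul_left (w i)
  simp_rw [← tsum_mul_left, ← Summable.tsum_finsetSum hprimes, zetaTerm, Finset.sum_mul, mul_assoc]

theorem infinite_setOf_prime_sum_mul_idealCount_ne_zero {ι : Type*} (T : Finset ι)
    (K : ι → Type*) [∀ i, Field (K i)] [∀ i, NumberField (K i)] (w : ι → ℝ)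
    (hw : ∑ i ∈ T, w i ≠ 0) :
    {p : ℕ | p.Prime ∧ ∑ i ∈ T, w i * idealCount (𝓞 (K i)) p ≠ 0}.Infinite := by
  intro hfin
  have hpole : (fun s ↦ ∑ i ∈ T, w i * ∑' p : Nat.Primes, zetaTerm (K i) s p +
      (∑ i ∈ T, w i) * Real.log (s - 1)) =O[𝓝[>] 1] (fun _ ↦ (1 : ℝ)) := by
    refine (IsBigO.fun_sum (s := T) fun i _ ↦
      (isBigO_tsum_primes_zetaTerm_add_log (K i)).const_mul_left (w i)).congr_left fun s ↦ ?_
    rw [Finset.sum_mul, ← Finset.sum_add_distrib]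
    exact Finset.sum_congr rfl fun i _ ↦ mul_add _ _ _
  have hfinite : (fun s ↦ ∑ i ∈ T, w i * ∑' p : Nat.Primes, zetaTerm (K i) s p)
      =O[𝓝[>] 1] (fun _ ↦ (1 : ℝ)) := by
    set B : Finset Nat.Primes := (hfin.preimage Nat.Primes.coe_nat_injective.injOn).toFinset
    have hcont : Continuous fun s : ℝ ↦
        ∑ p ∈ B, (∑ i ∈ T, w i * idealCount (𝓞 (K i)) p) * (p : ℝ) ^ (-s) :=
      continuous_finsetSum _ fun p _ ↦ continuous_const.mul <|
        continuous_const.rpow continuous_neg fun _ ↦ .inl (mod_cast p.2.ne_zero)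
    refine ((hcont.tendsto 1).mono_left nhdsWithin_le_nhds).isBigO_one ℝ |>.congr' ?_ .rfl
    filter_upwards [(Finset.eventually_all T).2 fun i _ ↦ eventually_summable_zetaTerm (K i)]
      with s hsum
    rw [sum_mul_tsum_primes_zetaTerm K w hsum]
    refine (tsum_eq_sum fun p hp ↦ ?_).symm
    rw [mul_eq_zero_of_left]
    by_contra hne
    exact hp ((Set.Finite.mem_toFinset _).2 ⟨p.2, hne⟩)
  refine not_isBigO_log_sub_one ((isBigO_const_mul_left_iff hw).1 ?_)
  simpa using hpole.sub hfinite

end ZetaAsymptotics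

section Frobenius

open Ideal
open scoped Pointwise

theorem card_eq_card_of_forall_pow_card_eq {k l : Type*} [Field k] [Field l] [Algebra k l]
    [Finite l] (h : ∀ x : l, x ^ Nat.card k = x) : Nat.card l = Nat.card k := by
  have := Finite.of_injective _ (algebraMap k l).injective
  have := Fintype.ofFinite k
  have hfrob : FiniteField.frobeniusAlgHom k l = 1 := by
    ext x
    simpa [Nat.card_eq_fintype_card] using h x
  rw [Module.natCard_eq_pow_finrank (K := k), ← FiniteField.orderOf_frobeniusAlgHom k l, hfrob,
    orderOf_one, pow_one]

variable {R S G : Type*} [CommRing R] [CommRing S] [Algebra R S] [Group G]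
  [MulSemiringAction G S] {Q : Ideal S} {g : G}

theorem inertia_smul_eq_bot (hI : Q.inertia G = ⊥) (τ : G) : (τ • Q).inertia G = ⊥ := by
  rw [eq_bot_iff] at hI ⊢
  intro h hh
  have hconj : τ⁻¹ * h * τ ∈ Q.inertia G := fun x ↦ by
    have := mem_pointwise_smul_iff_inv_smul_mem.1 (hh (τ • x))
    simpa [smul_sub, mul_smul] using this
  have h1 : τ⁻¹ * h * τ = 1 := Subgroup.mem_bot.1 (hI hconj)
  rw [mul_assoc, inv_mul_eq_one, right_eq_mul] at h1
  exact Subgroup.mem_bot.2 h1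

theorem finite_quotient_smul [Finite (S ⧸ Q)] (τ : G) : Finite (S ⧸ τ • Q) :=
  .of_equiv _ (quotientEquiv Q (τ • Q) (MulSemiringAction.toRingEquiv G S τ) rfl).toEquiv

variable [SMulCommClass G R S]

theorem eq_of_isArithFrobAt (hI : Q.inertia G = ⊥) {g' : G} (hg : IsArithFrobAt R g Q)
    (hg' : IsArithFrobAt R g' Q) : g = g' :=
  mul_inv_eq_one.1 (Subgroup.mem_bot.1 (hI ▸ hg.mul_inv_mem_inertia hg'))

attribute [local instance] Ideal.Quotient.field in
theorem stabilizer_eq_zpowers_of_isArithFrobAt [Q.IsPrime] [Finite (S ⧸ Q)]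
    (hI : Q.inertia G = ⊥) (hg : IsArithFrobAt R g Q) :
    MulAction.stabilizer G Q = Subgroup.zpowers g := by
  refine le_antisymm (fun h hh ↦ ?_) (Subgroup.zpowers_le.2 hg.mem_stabilizer)
  let P := Q.under R
  have : Finite (R ⧸ P) := hg.finite_quotient
  have := Fintype.ofFinite (R ⧸ P)
  have : P.IsMaximal := Ideal.Quotient.maximal_of_isField _ (Finite.isField_of_domain _)
  have : Q.IsMaximal := Ideal.Quotient.maximal_of_isField _ (Finite.isField_of_domain _)
  have hfrob : Ideal.Quotient.stabilizerHom Q P G ⟨g, hg.mem_stabilizer⟩ =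
      FiniteField.frobeniusAlgEquivOfAlgebraic (R ⧸ P) (S ⧸ Q) := by
    ext x
    obtain ⟨x, rfl⟩ := Ideal.Quotient.mk_surjective x
    rw [FiniteField.frobeniusAlgEquivOfAlgebraic_apply, ← Nat.card_eq_fintype_card]
    exact hg.mk_apply x
  have hinj : Function.Injective (Ideal.Quotient.stabilizerHom Q P G) := by
    rw [← MonoidHom.ker_eq_bot_iff,
      ← Subgroup.map_eq_bot_iff_of_injective _ (Subgroup.subtype_injective _),
      Ideal.Quotient.map_ker_stabilizer_subtype, hI]
  obtain ⟨n, hn⟩ := (FiniteField.bijective_frobeniusAlgEquivOfAlgebraic_pow (R ⧸ P) (S ⧸ Q)).2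
    (Ideal.Quotient.stabilizerHom Q P G ⟨h, hh⟩)
  simp only [← hfrob, ← map_pow] at hn
  have hpow : g ^ (n : ℕ) = h := congrArg Subtype.val (hinj hn)
  exact hpow ▸ Subgroup.npow_mem_zpowers g n

variable {T : Type*} [CommRing T] [Algebra T S]

theorem exists_under_smul_eq [Finite G] [Algebra.IsInvariant R S G] [Algebra R T]
    [IsScalarTower R T S] [Algebra.IsIntegral T S] [FaithfulSMul T S] [Q.IsPrime]
    {P : Ideal T} [P.IsPrime] (hP : P.under R = Q.under R) : ∃ τ : G, (τ • Q).under T = P := by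
  obtain ⟨Q', hQ', hQ'P⟩ := (inferInstance : Nonempty (P.primesOver S))
  have hunder : Q.under R = Q'.under R := by rw [← hP, hQ'P.over, under_under]
  obtain ⟨τ, rfl⟩ := Algebra.IsInvariant.exists_smul_of_under_eq R S G Q Q' hunder
  exact ⟨τ, hQ'P.over.symm⟩

variable {H : Subgroup G} [SMulCommClass H T S]

theorem under_smul_eq_under_iff [Finite H] [Algebra.IsInvariant T S H] [Q.IsPrime]
    [Finite (S ⧸ Q)] (hI : Q.inertia G = ⊥) (hg : IsArithFrobAt R g Q) (hgH : g ∈ H) {τ : G} :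
    (τ • Q).under T = Q.under T ↔ τ ∈ H := by
  refine ⟨fun h ↦ ?_, fun h ↦ Q.under_smul T (⟨τ, h⟩ : H)⟩
  obtain ⟨h, hh : τ • Q = (h : G) • Q⟩ :=
    Algebra.IsInvariant.exists_smul_of_under_eq T S H Q (τ • Q) h.symm
  have hstab : (h : G)⁻¹ * τ ∈ MulAction.stabilizer G Q := by
    rw [MulAction.mem_stabilizer_iff, mul_smul, hh, inv_smul_smul]
  rw [stabilizer_eq_zpowers_of_isArithFrobAt hI hg] at hstab
  exact (H.mul_mem_cancel_left (H.inv_mem h.2)).1 (Subgroup.zpowers_le.2 hgH hstab)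

theorem under_smul_eq_under_smul_iff [Finite H] [Algebra.IsInvariant T S H] [Q.IsPrime]
    [Finite (S ⧸ Q)] (hI : Q.inertia G = ⊥) (hg : IsArithFrobAt R g Q) {τ₀ : G}
    (h₀ : τ₀ * g * τ₀⁻¹ ∈ H) {τ : G} :
    (τ • Q).under T = (τ₀ • Q).under T ↔ τ * τ₀⁻¹ ∈ H := by
  have : Finite (S ⧸ τ₀ • Q) := finite_quotient_smul τ₀
  rw [← under_smul_eq_under_iff (T := T) (inertia_smul_eq_bot hI τ₀) (hg.conj τ₀) h₀, mul_smul,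
    inv_smul_smul]

theorem mem_of_card_quotient_under_eq [Finite H] [Algebra.IsInvariant T S H] [Q.IsPrime]
    [Finite (S ⧸ Q)] (hI : Q.inertia G = ⊥) (hg : IsArithFrobAt R g Q)
    (hcard : Nat.card (T ⧸ Q.under T) = Nat.card (R ⧸ Q.under R)) : g ∈ H := by
  obtain ⟨h, hh⟩ := IsArithFrobAt.exists_of_isInvariant T H Q
  have hh' : IsArithFrobAt R (h : G) Q := fun x ↦ hcard ▸ hh x
  exact eq_of_isArithFrobAt hI hg hh' ▸ h.2

variable [Algebra R T] [IsScalarTower R T S]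

attribute [local instance] Ideal.Quotient.field in
theorem card_quotient_under_eq_of_mem [Q.IsPrime] [Finite (S ⧸ Q)]
    (hg : IsArithFrobAt R g Q) (hgH : g ∈ H) :
    Nat.card (T ⧸ Q.under T) = Nat.card (R ⧸ Q.under R) := by
  have := hg.finite_quotient
  have : Finite (T ⧸ Q.under T) := .of_injective _ (algebraMap_quotient_injective (I := Q))
  have : (Q.under R).IsMaximal :=
    Ideal.Quotient.maximal_of_isField _ (Finite.isField_of_domain _)
  have : (Q.under T).IsMaximal :=
    Ideal.Quotient.maximal_of_isField _ (Finite.isField_of_domain _)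
  have : (Q.under T).LiesOver (Q.under R) := ⟨(under_under Q).symm⟩
  refine card_eq_card_of_forall_pow_card_eq fun x ↦ ?_
  obtain ⟨x, rfl⟩ := Ideal.Quotient.mk_surjective x
  rw [← map_pow, Ideal.Quotient.eq, under_def, mem_comap, map_sub, map_pow, ← neg_sub, neg_mem_iff]
  have hfix : g • algebraMap T S x = algebraMap T S x := smul_algebraMap (⟨g, hgH⟩ : H) x
  simpa [hfix] using hg (algebraMap T S x)

variable (T H) in
theorem card_conj_mem_eq [Finite G] [Algebra.IsInvariant R S G] [Algebra.IsInvariant T S H]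
    [FaithfulSMul T S] [Q.IsPrime] [Finite (S ⧸ Q)] (hI : Q.inertia G = ⊥)
    (hg : IsArithFrobAt R g Q) :
    Nat.card {τ : G // τ * g * τ⁻¹ ∈ H} = Nat.card H * Nat.card {P : Ideal T // P.IsPrime ∧
      P.under R = Q.under R ∧ Nat.card (T ⧸ P) = Nat.card (R ⧸ Q.under R)} := by
  have := Algebra.IsInvariant.isIntegral T S H
  have hfin (τ : G) : Finite (S ⧸ τ • Q) := finite_quotient_smul τ
  have hunder (τ : G) : (τ • Q).under R = Q.under R := Q.under_smul R τ
  let F (τ : {τ : G // τ * g * τ⁻¹ ∈ H}) : {P : Ideal T // P.IsPrime ∧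
      P.under R = Q.under R ∧ Nat.card (T ⧸ P) = Nat.card (R ⧸ Q.under R)} :=
    ⟨((τ : G) • Q).under T, inferInstance, by rw [under_under, hunder],
      hunder τ ▸ card_quotient_under_eq_of_mem (hg.conj τ) τ.2⟩
  have fiberEquiv (P) : Nonempty ({τ // F τ = P} ≃ H) := by
    obtain ⟨P, hP, hPR, hcard⟩ := P
    obtain ⟨τ₀, rfl⟩ := exists_under_smul_eq (G := G) (S := S) hPR
    have h₀ : τ₀ * g * τ₀⁻¹ ∈ H := mem_of_card_quotient_under_eq (inertia_smul_eq_bot hI τ₀)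
      (hg.conj τ₀) (by rw [hcard, hunder])
    have hF (τ) : F τ = ⟨_, hP, hPR, hcard⟩ ↔ (τ : G) * τ₀⁻¹ ∈ H :=
      Subtype.ext_iff.trans (under_smul_eq_under_smul_iff hI hg h₀)
    have hconj (h : H) : h * τ₀ * g * (h * τ₀)⁻¹ ∈ H := by
      convert H.mul_mem (H.mul_mem h.2 h₀) (H.inv_mem h.2) using 1
      group
    exact ⟨{ toFun τ := ⟨τ * τ₀⁻¹, (hF τ).1 τ.2⟩
             invFun h := ⟨⟨h * τ₀, hconj h⟩, (hF _).2 (by simp)⟩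
             left_inv τ := by simp
             right_inv h := by simp }⟩
  rw [Nat.card_congr (Equiv.sigmaFiberEquiv F).symm,
    Nat.card_congr (Equiv.sigmaEquivProdOfEquiv fun P ↦ (fiberEquiv P).some), Nat.card_prod,
    mul_comm]

end Frobenius

section RationalPrimes

open Ideal
open scoped NumberField

theorem under_int_eq_span_natCast {S : Type*} [CommRing S] {p : ℕ} (hp : p.Prime) {Q : Ideal S}
    [Q.IsPrime] (hpQ : (p : S) ∈ Q) : Q.under ℤ = span {(p : ℤ)} := by
  have hmax : (span {(p : ℤ)}).IsMaximal :=
    PrincipalIdealRing.isMaximal_of_irreducible (Nat.prime_iff_prime_int.1 hp).irreducible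
  refine (hmax.eq_of_le IsPrime.ne_top' ?_).symm
  rw [span_singleton_le_iff_mem, under_def, mem_comap]
  simpa using hpQ

theorem card_quotient_under_int {S : Type*} [CommRing S] {p : ℕ} (hp : p.Prime) {Q : Ideal S}
    [Q.IsPrime] (hpQ : (p : S) ∈ Q) : Nat.card (ℤ ⧸ Q.under ℤ) = p := by
  rw [under_int_eq_span_natCast hp hpQ, Nat.card_congr (Int.quotientSpanNatEquivZMod p).toEquiv,
    Nat.card_zmod]

theorem exists_isPrime_natCast_mem (S : Type*) [CommRing S] [Algebra.IsIntegral ℤ S]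
    [FaithfulSMul ℤ S] {p : ℕ} (hp : p.Prime) : ∃ Q : Ideal S, Q.IsPrime ∧ (p : S) ∈ Q := by
  have : (span {(p : ℤ)}).IsPrime :=
    (span_singleton_prime (Nat.cast_ne_zero.2 hp.ne_zero)).2 (Nat.prime_iff_prime_int.1 hp)
  obtain ⟨Q, hQ, hQp⟩ := (inferInstance : Nonempty ((span {(p : ℤ)}).primesOver S))
  refine ⟨Q, hQ, ?_⟩
  have : (p : ℤ) ∈ Q.under ℤ := hQp.over ▸ mem_span_singleton_self _
  simpa [under_def] using this

variable {S : Type*} [CommRing S] [IsDedekindDomain S] [Module.Free ℤ S]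

theorem absNorm_eq_prime_iff {p : ℕ} (hp : p.Prime) {I : Ideal S} :
    absNorm I = p ↔ I.IsPrime ∧ I.under ℤ = span {(p : ℤ)} ∧ Nat.card (S ⧸ I) = p := by
  rw [← Submodule.cardQuot_apply, ← absNorm_apply]
  refine ⟨fun h ↦ ?_, fun h ↦ h.2.2⟩
  have hI : I.IsPrime := isPrime_of_irreducible_absNorm (h ▸ hp)
  exact ⟨hI, under_int_eq_span_natCast hp (h ▸ absNorm_mem I), h⟩

variable [Module.Finite ℤ S]

theorem finite_quotient_of_natCast_mem {n : ℕ} (hn : n ≠ 0) {I : Ideal S} (hnI : (n : S) ∈ I) :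
    Finite (S ⧸ I) := by
  rw [← absNorm_ne_zero_iff, Ne, absNorm_eq_zero_iff]
  rintro rfl
  exact span_natCast_ne_zero hn (span_singleton_eq_bot.2 hnI)

theorem dvd_absNorm_span_singleton {p : ℕ} (hp : p.Prime) {Q : Ideal S} [Q.IsPrime]
    (hpQ : (p : S) ∈ Q) {a : S} (ha : a ∈ Q) : p ∣ absNorm (span {a}) := by
  have hN : (absNorm (span {a}) : S) ∈ Q := (span_singleton_le_iff_mem Q).2 ha (absNorm_mem _)
  rw [← Int.natCast_dvd_natCast, ← mem_span_singleton, ← under_int_eq_span_natCast hp hpQ,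
    under_def, mem_comap]
  simpa using hN

theorem finite_setOf_prime_exists_mem {a : S} (ha : a ≠ 0) :
    {p : ℕ | p.Prime ∧ ∃ Q : Ideal S, Q.IsPrime ∧ (p : S) ∈ Q ∧ a ∈ Q}.Finite := by
  refine (Nat.divisors (absNorm (span {a}))).finite_toSet.subset ?_
  rintro p ⟨hp, Q, hQ, hpQ, haQ⟩
  have hN : absNorm (span {a}) ≠ 0 := by simpa [absNorm_eq_zero_iff] using ha
  exact Nat.mem_divisors.2 ⟨dvd_absNorm_span_singleton hp hpQ haQ, hN⟩

theorem finite_setOf_prime_not_injOn_mk {A : Set S} (hA : A.Finite) :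
    {p : ℕ | p.Prime ∧ ∃ Q : Ideal S, Q.IsPrime ∧ (p : S) ∈ Q ∧
      ¬ Set.InjOn (Ideal.Quotient.mk Q) A}.Finite := by
  refine (((hA.prod hA).subset (Set.sep_subset _ fun ab ↦ ab.1 ≠ ab.2)).biUnion fun ab hab ↦
    finite_setOf_prime_exists_mem (sub_ne_zero.2 hab.2)).subset ?_
  rintro p ⟨hp, Q, hQ, hpQ, hinj⟩
  obtain ⟨a, ha, b, hb, hmk, hab⟩ : ∃ a ∈ A, ∃ b ∈ A,
      Ideal.Quotient.mk Q a = Ideal.Quotient.mk Q b ∧ a ≠ b := by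
    simpa [Set.InjOn] using hinj
  exact Set.mem_biUnion (x := (a, b)) ⟨⟨ha, hb⟩, hab⟩ ⟨hp, Q, hQ, hpQ, Ideal.Quotient.eq.1 hmk⟩

theorem finite_setOf_prime_inertia_ne_bot {G : Type*} [Group G] [Finite G]
    [MulSemiringAction G S] [FaithfulSMul G S] :
    {p : ℕ | p.Prime ∧ ∃ Q : Ideal S, Q.IsPrime ∧ (p : S) ∈ Q ∧ Q.inertia G ≠ ⊥}.Finite := by
  have hmove (g : {g : G // g ≠ 1}) : ∃ x : S, (g : G) • x - x ≠ 0 := by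
    by_contra! h
    exact g.2 (FaithfulSMul.eq_of_smul_eq_smul fun x : S ↦ by
      rw [one_smul, sub_eq_zero.1 (h x)])
  choose x hx using hmove
  refine (Set.finite_iUnion fun g ↦ finite_setOf_prime_exists_mem (hx g)).subset ?_
  rintro p ⟨hp, Q, hQ, hpQ, hI⟩
  obtain ⟨⟨g, hg⟩, hg1⟩ := Subgroup.ne_bot_iff_exists_ne_one.1 hI
  exact Set.mem_iUnion.2 ⟨⟨g, by simpa using hg1⟩, hp, Q, hQ, hpQ, hg _⟩

end RationalPrimes

section GaloisCount

open Ideal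
open scoped NumberField

variable {L : Type*} [Field L] [NumberField L] [IsGalois ℚ L]

theorem card_conj_mem_eq_card_mul_idealCount (K : Type*) [Field K] [NumberField K] [Algebra K L]
    (H : Subgroup Gal(L/ℚ)) [IsGaloisGroup H K L] {p : ℕ} (hp : p.Prime) {Q : Ideal (𝓞 L)}
    [Q.IsPrime] (hpQ : (p : 𝓞 L) ∈ Q) (hI : Q.inertia Gal(L/ℚ) = ⊥) {g : Gal(L/ℚ)}
    (hg : IsArithFrobAt ℤ g Q) :
    Nat.card {τ : Gal(L/ℚ) // τ * g * τ⁻¹ ∈ H} = Nat.card H * idealCount (𝓞 K) p := by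
  have := IsGaloisGroup.of_isFractionRing H (𝓞 K) (𝓞 L) K L
  have : Finite (𝓞 L ⧸ Q) := finite_quotient_of_natCast_mem hp.ne_zero hpQ
  rw [card_conj_mem_eq (𝓞 K) H hI hg, card_quotient_under_int hp hpQ,
    under_int_eq_span_natCast hp hpQ, idealCount]
  congr 1
  exact Nat.card_congr (Equiv.subtypeEquivRight fun P ↦ (absNorm_eq_prime_iff hp).symm)

end GaloisCount

section CyclicSubgroups

open ArithmeticFunction Subgroup

variable {G : Type*} [Group G] {σ : G}

theorem pow_mem_zpowers_pow_iff_dvd {d : ℕ} (hd : d ∣ orderOf σ) {k : ℕ} :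
    σ ^ k ∈ zpowers (σ ^ d) ↔ d ∣ k := by
  constructor
  · rintro ⟨i, hi⟩
    have hmod : (d : ℤ) * i ≡ k [ZMOD orderOf σ] := by
      rw [← zpow_eq_zpow_iff_modEq, zpow_mul, zpow_natCast, zpow_natCast]
      exact hi
    have hdvd : (d : ℤ) ∣ k := by
      simpa using dvd_add (hmod.of_dvd (Int.natCast_dvd_natCast.2 hd)).dvd (dvd_mul_right (d : ℤ) i)
    exact Int.natCast_dvd_natCast.1 hdvd
  · rintro ⟨c, rfl⟩
    rw [pow_mul]
    exact npow_mem_zpowers _ _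

theorem zpowers_pow_eq_zpowers_iff {k : ℕ} :
    zpowers (σ ^ k) = zpowers σ ↔ k.gcd (orderOf σ) = 1 := by
  rw [← mem_zpowers_pow_iff, le_antisymm_iff, zpowers_le, zpowers_le]
  exact and_iff_right (npow_mem_zpowers σ k)

theorem sum_divisors_moebius (n : ℕ) : ∑ d ∈ n.divisors, moebius d = if n = 1 then 1 else 0 := by
  rw [← coe_mul_zeta_apply, moebius_mul_coe_zeta, one_apply]

open scoped Classical in
theorem sum_moebius_of_mem_zpowers_pow (hσ : IsOfFinOrder σ) (h : G) :
    ∑ d ∈ (orderOf σ).divisors with h ∈ zpowers (σ ^ d), moebius d =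
      if zpowers h = zpowers σ then 1 else 0 := by
  by_cases hh : h ∈ zpowers σ
  · obtain ⟨k, rfl⟩ := hσ.mem_powers_iff_mem_zpowers.2 hh
    have hdiv : {d ∈ (orderOf σ).divisors | σ ^ k ∈ zpowers (σ ^ d)} =
        (k.gcd (orderOf σ)).divisors := by
      ext d
      simp only [Finset.mem_filter, Nat.mem_divisors, Nat.dvd_gcd_iff]
      have := hσ.orderOf_pos.ne'
      constructor
      · rintro ⟨⟨hd, -⟩, hk⟩
        exact ⟨⟨(pow_mem_zpowers_pow_iff_dvd hd).1 hk, hd⟩, Nat.gcd_ne_zero_right this⟩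
      · rintro ⟨⟨hk, hd⟩, -⟩
        exact ⟨⟨hd, this⟩, (pow_mem_zpowers_pow_iff_dvd hd).2 hk⟩
    simp only [hdiv, sum_divisors_moebius, zpowers_pow_eq_zpowers_iff]
  · have hne : zpowers h ≠ zpowers σ := fun heq ↦ hh (heq ▸ mem_zpowers h)
    rw [if_neg hne, Finset.filter_false_of_mem, Finset.sum_empty]
    exact fun d _ hd ↦ hh (zpowers_le.2 (npow_mem_zpowers σ d) hd)

theorem sum_moebius_mul_card_mem_zpowers_pow {ι : Type*} [Finite ι] (hσ : IsOfFinOrder σ)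
    (φ : ι → G) :
    ∑ d ∈ (orderOf σ).divisors, moebius d * (Nat.card {i // φ i ∈ zpowers (σ ^ d)} : ℤ) =
      Nat.card {i // zpowers (φ i) = zpowers σ} := by
  classical
  have := Fintype.ofFinite ι
  have hcard (P : ι → Prop) : (Nat.card {i // P i} : ℤ) = ∑ i, if P i then 1 else 0 := by
    rw [Finset.sum_boole, Nat.card_eq_fintype_card, Fintype.card_subtype]
  simp only [hcard, Finset.mul_sum, mul_ite, mul_one, mul_zero]
  rw [Finset.sum_comm]
  refine Finset.sum_congr rfl fun i _ ↦ ?_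
  rw [← sum_moebius_of_mem_zpowers_pow hσ, Finset.sum_filter]

theorem sum_moebius_mul_card_zpowers_pow_ne_zero [Finite G] (σ : G) :
    ∑ d ∈ (orderOf σ).divisors, moebius d * (Nat.card (zpowers (σ ^ d)) : ℤ) ≠ 0 := by
  have : Nonempty {h : G // zpowers h = zpowers σ} := ⟨⟨σ, rfl⟩⟩
  have hsum := sum_moebius_mul_card_mem_zpowers_pow (isOfFinOrder_of_finite σ) (id : G → G)
  simp only [id] at hsum
  exact hsum.trans_ne (Nat.cast_ne_zero.2 Nat.card_pos.ne')

end CyclicSubgroups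

section FrobeniusInfinitude

open ArithmeticFunction Ideal IntermediateField Subgroup
open scoped NumberField Pointwise

variable {L : Type*} [Field L] [NumberField L] [IsGalois ℚ L]

theorem sum_moebius_mul_idealCount_eq (σ : Gal(L/ℚ)) {p : ℕ} (hp : p.Prime) {Q : Ideal (𝓞 L)}
    [Q.IsPrime] (hpQ : (p : 𝓞 L) ∈ Q) (hI : Q.inertia Gal(L/ℚ) = ⊥) {g : Gal(L/ℚ)}
    (hg : IsArithFrobAt ℤ g Q) :
    ∑ d ∈ (orderOf σ).divisors, moebius d * Nat.card (zpowers (σ ^ d)) *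
        (idealCount (𝓞 (fixedField (zpowers (σ ^ d)))) p : ℤ) =
      Nat.card {τ : Gal(L/ℚ) // zpowers (τ * g * τ⁻¹) = zpowers σ} := by
  have (H : Subgroup Gal(L/ℚ)) : IsGaloisGroup H (fixedField H) L :=
    inferInstanceAs (IsGaloisGroup H (FixedPoints.intermediateField H : IntermediateField ℚ L) L)
  rw [← sum_moebius_mul_card_mem_zpowers_pow (isOfFinOrder_of_finite σ)]
  refine Finset.sum_congr rfl fun d _ ↦ ?_
  rw [card_conj_mem_eq_card_mul_idealCount (fixedField (zpowers (σ ^ d))) _ hp hpQ hI hg,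
    Nat.cast_mul, mul_assoc]

theorem infinite_setOf_prime_exists_stabilizer_eq_zpowers (σ : Gal(L/ℚ)) :
    {p : ℕ | p.Prime ∧ ∃ Q : Ideal (𝓞 L), Q.IsPrime ∧ (p : 𝓞 L) ∈ Q ∧
      MulAction.stabilizer Gal(L/ℚ) Q = zpowers σ}.Infinite := by
  have hinf := infinite_setOf_prime_sum_mul_idealCount_ne_zero (orderOf σ).divisors
    (fun d ↦ fixedField (zpowers (σ ^ d))) (fun d ↦ moebius d * Nat.card (zpowers (σ ^ d)))
    (mod_cast sum_moebius_mul_card_zpowers_pow_ne_zero σ)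
  have : FaithfulSMul Gal(L/ℚ) (𝓞 L) :=
    (IsGaloisGroup.of_isFractionRing Gal(L/ℚ) ℤ (𝓞 L) ℚ L).faithful
  refine (hinf.sdiff (finite_setOf_prime_inertia_ne_bot (S := 𝓞 L) (G := Gal(L/ℚ)))).mono ?_
  rintro p ⟨⟨hp, hsum⟩, hunram⟩
  obtain ⟨Q, hQ, hpQ⟩ := exists_isPrime_natCast_mem (𝓞 L) hp
  have hI : Q.inertia Gal(L/ℚ) = ⊥ := by
    by_contra hI
    exact hunram ⟨hp, Q, hQ, hpQ, hI⟩
  have : Finite (𝓞 L ⧸ Q) := finite_quotient_of_natCast_mem hp.ne_zero hpQ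
  obtain ⟨g, hg⟩ := IsArithFrobAt.exists_of_isInvariant ℤ Gal(L/ℚ) Q
  have hcard : Nat.card {τ : Gal(L/ℚ) // zpowers (τ * g * τ⁻¹) = zpowers σ} ≠ 0 := by
    rw [← Nat.cast_ne_zero (R := ℤ), ← sum_moebius_mul_idealCount_eq σ hp hpQ hI hg]
    exact_mod_cast hsum
  obtain ⟨τ, hτ⟩ := (Nat.card_ne_zero.1 hcard).1
  have : Finite (𝓞 L ⧸ τ • Q) := finite_quotient_smul τ
  refine ⟨hp, τ • Q, inferInstance, ?_,
    (stabilizer_eq_zpowers_of_isArithFrobAt (inertia_smul_eq_bot hI τ) (hg.conj τ)).trans hτ⟩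
  have hfix : τ • (p : 𝓞 L) = p := map_natCast (MulSemiringAction.toRingHom _ (𝓞 L) τ) p
  exact hfix ▸ Ideal.smul_mem_pointwise_smul τ _ Q hpQ

end FrobeniusInfinitude

section Roots

open scoped NumberField Pointwise

theorem exists_mem_rootSet_sub_mem {R S : Type*} [CommRing R] [CommRing S] [IsDomain S]
    [Algebra R S] {f : R[X]} (hm : f.Monic) (hspl : (f.map (algebraMap R S)).Splits) {Q : Ideal S}
    [Q.IsPrime] {a : R} (ha : f.eval a ∈ Q.under R) :
    ∃ α ∈ f.rootSet S, algebraMap R S a - α ∈ Q := by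
  rw [Ideal.under_def, Ideal.mem_comap, ← aeval_algebraMap_apply_eq_algebraMap_eval,
    ← eval_map_algebraMap, hspl.eval_eq_prod_roots_of_monic (hm.map _),
    Ideal.IsPrime.multiset_prod_mem_iff_exists_mem inferInstance] at ha
  obtain ⟨_, hfactor, hmem⟩ := ha
  obtain ⟨α, hα, rfl⟩ := Multiset.mem_map.1 hfactor
  exact ⟨α, mem_rootSet'.2 (by simpa using hα), hmem⟩

-- An element of the decomposition group of `Q` fixes `a`, hence permutes the roots
-- congruent to `a` modulo `Q`; there is only one of these.
theorem exists_mem_rootSet_smul_eq {R S G : Type*} [CommRing R] [CommRing S] [IsDomain S]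
    [Algebra R S] [Group G] [MulSemiringAction G S] [SMulCommClass G R S] {f : R[X]}
    (hm : f.Monic) (hspl : (f.map (algebraMap R S)).Splits) {Q : Ideal S} [Q.IsPrime]
    (hinj : Set.InjOn (Ideal.Quotient.mk Q) (f.rootSet S)) {a : R} (ha : f.eval a ∈ Q.under R)
    {g : G} (hg : g ∈ MulAction.stabilizer G Q) : ∃ α ∈ f.rootSet S, g • α = α := by
  obtain ⟨α, hα, haα⟩ := exists_mem_rootSet_sub_mem hm hspl ha
  have hgα : algebraMap R S a - g • α ∈ Q := by
    have := Ideal.smul_mem_pointwise_smul g _ Q haα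
    rwa [MulAction.mem_stabilizer_iff.1 hg, smul_sub, smul_algebraMap] at this
  refine ⟨α, hα, hinj (smul_mem_rootSet g hα) hα (Ideal.Quotient.eq.2 ?_)⟩
  simpa using Q.sub_mem haα hgα

theorem splits_map_ringOfIntegers {L : Type*} [Field L] {f : ℤ[X]} (hm : f.Monic)
    (hspl : (f.map (algebraMap ℤ L)).Splits) : (f.map (algebraMap ℤ (𝓞 L))).Splits := by
  have hmap : (f.map (algebraMap ℤ (𝓞 L))).map (algebraMap (𝓞 L) L) = f.map (algebraMap ℤ L) := by
    rw [map_map, ← IsScalarTower.algebraMap_eq]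
  refine .of_splits_map_of_injective (FaithfulSMul.algebraMap_injective (𝓞 L) L) (hmap ▸ hspl) ?_
  rw [hmap]
  intro α hα
  exact ⟨⟨α, f, hm, by simpa [IsRoot, eval_map] using isRoot_of_mem_roots hα⟩, rfl⟩

theorem mem_under_int_of_intCast_zmod_eq_zero {S : Type*} [CommRing S] {p : ℕ} {Q : Ideal S}
    (hpQ : (p : S) ∈ Q) {n : ℤ} (hn : (n : ZMod p) = 0) : n ∈ Q.under ℤ := by
  obtain ⟨c, rfl⟩ := (ZMod.intCast_zmod_eq_zero_iff_dvd _ _).1 hn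
  rw [Ideal.under_def, Ideal.mem_comap]
  simpa using Q.mul_mem_right (c : S) hpQ

theorem infinitely_many_rootless_primes_of_fixed_point_free_general {L : Type*} [Field L]
    [NumberField L] [IsGalois ℚ L] (f : ℤ[X]) (hm : f.Monic)
    (hspl : (f.map (algebraMap ℤ L)).Splits) (σ : Gal(L/ℚ))
    (hσ : ∀ α : L, aeval α f = 0 → σ α ≠ α) :
    {p : ℕ | p.Prime ∧ ∀ x : ZMod p, (f.map (Int.castRingHom (ZMod p))).eval x ≠ 0}.Infinite := by
  refine ((infinite_setOf_prime_exists_stabilizer_eq_zpowers σ).sdiff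
    (finite_setOf_prime_not_injOn_mk (f.rootSet_finite (𝓞 L)))).mono ?_
  rintro p ⟨⟨hp, Q, hQ, hpQ, hstab⟩, hinj⟩
  refine ⟨hp, fun x hx ↦ ?_⟩
  obtain ⟨a, rfl⟩ := ZMod.intCast_surjective x
  have ha : f.eval a ∈ Q.under ℤ :=
    mem_under_int_of_intCast_zmod_eq_zero hpQ (by simpa using hx)
  have hinjQ : Set.InjOn (Ideal.Quotient.mk Q) (f.rootSet (𝓞 L)) := by
    by_contra h
    exact hinj ⟨hp, Q, hQ, hpQ, h⟩
  obtain ⟨α, hα, hfix⟩ := exists_mem_rootSet_smul_eq hm (splits_map_ringOfIntegers hm hspl) hinjQ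
    ha (hstab ▸ Subgroup.mem_zpowers σ)
  refine hσ α ?_ (congrArg Subtype.val hfix)
  rw [aeval_algebraMap_apply, aeval_eq_zero_of_mem_rootSet hα, map_zero]

end Roots

section SplittingField

-- The instance found here is the `ℚ`-algebra structure of a field of characteristic zero, not the
-- one that comes with the splitting field.
theorem isSplittingField_rat_splittingField (g : ℚ[X]) : IsSplittingField ℚ g.SplittingField g := by
  convert IsSplittingField.splittingField g
  exact Subsingleton.elim _ _

theorem isGalois_rat_splittingField (g : ℚ[X]) : IsGalois ℚ g.SplittingField :=
  have := isSplittingField_rat_splittingField g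
  have := Normal.of_isSplittingField (F := ℚ) (E := g.SplittingField) g
  ⟨⟩

theorem splits_map_splittingField (f : ℤ[X]) :
    (f.map (algebraMap ℤ (f.map (algebraMap ℤ ℚ)).SplittingField)).Splits := by
  have := SplittingField.splits (f.map (algebraMap ℤ ℚ))
  rwa [map_map, ← IsScalarTower.algebraMap_eq] at this

end SplittingField

/-- If some element of the Galois group of a monic squarefree integer polynomial
fixes no root, then there are infinitely many primes modulo which it has no root. -/
theorem infinitely_many_rootless_primes_of_fixed_point_free (f : Polynomial ℤ)
    (hm : f.Monic) (hsf : Squarefree f)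
    (σ : (f.map (algebraMap ℤ ℚ)).SplittingField ≃ₐ[ℚ]
        (f.map (algebraMap ℤ ℚ)).SplittingField)
    (hσ : ∀ α : (f.map (algebraMap ℤ ℚ)).SplittingField,
      Polynomial.aeval α (f.map (algebraMap ℤ ℚ)) = 0 → σ α ≠ α) :
    {p : ℕ | p.Prime ∧ ∀ x : ZMod p, (f.map (Int.castRingHom (ZMod p))).eval x ≠ 0}.Infinite := by
  have := isGalois_rat_splittingField (f.map (algebraMap ℤ ℚ))
  have : NumberField (f.map (algebraMap ℤ ℚ)).SplittingField := ⟨⟩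
  exact infinitely_many_rootless_primes_of_fixed_point_free_general f hm
    (splits_map_splittingField f) σ fun α hα ↦ hσ α (by rwa [aeval_map_algebraMap])
end

section
/- Let f ∈ ℤ[X] be monic and irreducible of degree ≥ 2. Then there exist infinitely many primes p such that f mod p has no root in 𝔽_p. -/
/-!
Primes are counted by the logarithmic singularity at `s = 1` of their Dirichlet series. For a
number field `F` let `r_F(p)` be the number of prime ideals of `𝓞 F` of norm `p`. The zeta function
of `F` has an Euler product and a simple pole at `1`, and ideals whose norm is not a prime number
contribute a bounded amount to its logarithm, so `∑ r_F(p) p ^ (-s) ~ log (1 / (s - 1))`, whatever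
`F` is.

Let `K = ℚ[X]/(f)` and let `L` be a number field of degree `n` over `ℚ` in which `f` has two
distinct roots. Outside finitely many `p`, the number of roots of `f` modulo `p` is at most `r_K(p)`
by Kummer–Dedekind, and it is at least `2` if `r_L(p) > 0`, since the two roots in `L` stay distinct
in the residue field `𝔽_p`. If `r_K(p)` vanished for only finitely many primes, then
`r_K(p) ≥ 1 + r_L(p) / n` for almost all `p`, because `r_L(p) ≤ n`; comparing singularities would
give `1 ≥ 1 + 1 / n`. So `r_K(p) = 0`, and `f` has no root modulo `p`, for infinitely many `p`.
-/

open Polynomial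
open NumberField Filter Topology

section EulerProduct

variable {M : Type*} [CommMonoidWithZero M] [UniqueFactorizationMonoid M]

theorem map_prime_lt_one_of_summable {f : M →*₀ ℝ} (hf₀ : ∀ a, 0 ≤ f a) (hf : Summable f) {q : M}
    (hq : Prime q) : f q < 1 := by
  have hpow : Summable fun k : ℕ ↦ f q ^ k := by
    simpa [Function.comp_def] using
      hf.comp_injective (pow_injective_of_not_isUnit hq.not_isUnit hq.ne_zero)
  simpa [abs_of_nonneg (hf₀ q)] using summable_geometric_iff_norm_lt_one.1 hpow

/-- The nonzero elements all of whose prime divisors lie in `T`: the analogue of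
`Nat.factoredNumbers` in a unique factorization monoid. -/
def factoredElements (T : Finset {q : M // Prime q}) : Set M :=
  {a | a ≠ 0 ∧ ∀ q : {q : M // Prime q}, q.1 ∣ a → q ∈ T}

variable [Subsingleton Mˣ]

theorem factoredElements_empty [Nontrivial M] :
    factoredElements (∅ : Finset {q : M // Prime q}) = {1} := by
  ext a
  refine ⟨fun ⟨ha₀, ha⟩ ↦ ?_, ?_⟩
  · by_contra ha₁
    obtain ⟨q, hq, hqa⟩ :=
      WfDvdMonoid.exists_irreducible_factor (mt isUnit_iff_eq_one.1 ha₁) ha₀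
    exact Finset.notMem_empty _ (ha ⟨q, hq.prime⟩ hqa)
  · rintro rfl
    exact ⟨one_ne_zero, fun q hq ↦ (q.2.not_isUnit (isUnit_of_dvd_one hq)).elim⟩

theorem pow_mul_mem_factoredElements_insert [DecidableEq M] {T : Finset {q : M // Prime q}}
    (q : {q : M // Prime q}) {a : M} (ha : a ∈ factoredElements T) (k : ℕ) :
    q.1 ^ k * a ∈ factoredElements (insert q T) := by
  refine ⟨mul_ne_zero (pow_ne_zero k q.2.ne_zero) ha.1, fun r hr ↦ ?_⟩
  rcases r.2.dvd_or_dvd hr with hrq | hra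
  · have hrq' := (r.2.dvd_prime_iff_associated q.2).1 (r.2.dvd_of_dvd_pow hrq)
    exact Finset.mem_insert.2 (.inl (Subtype.ext (associated_iff_eq.1 hrq')))
  · exact Finset.mem_insert_of_mem (ha.2 r hra)

theorem bijective_pow_mul_factoredElements [DecidableEq M] {T : Finset {q : M // Prime q}}
    {q : {q : M // Prime q}} (hqT : q ∉ T) :
    Function.Bijective fun x : ℕ × factoredElements T ↦
      (⟨q.1 ^ x.1 * x.2, pow_mul_mem_factoredElements_insert q x.2.2 x.1⟩ :
        factoredElements (insert q T)) := by
  have not_dvd (a : factoredElements T) : ¬ q.1 ∣ a.1 := fun h ↦ hqT (a.2.2 q h)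
  refine ⟨fun ⟨k, a⟩ ⟨l, b⟩ hab ↦ ?_, fun ⟨a, ha₀, ha⟩ ↦ ?_⟩
  · have hab : q.1 ^ k * a.1 = q.1 ^ l * b.1 := congrArg Subtype.val hab
    obtain rfl : k = l := by
      simpa [emultiplicity_mul q.2, emultiplicity_eq_zero.2 (not_dvd _),
        emultiplicity_pow_self_of_prime q.2] using congrArg (emultiplicity q.1) hab
    rw [Subtype.ext (mul_left_cancel₀ (pow_ne_zero k q.2.ne_zero) hab)]
  · obtain ⟨k, c, hqc, rfl⟩ := WfDvdMonoid.max_power_factor ha₀ q.2.irreducible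
    refine ⟨⟨k, c, right_ne_zero_of_mul ha₀, fun r hrc ↦ ?_⟩, rfl⟩
    exact (Finset.mem_insert.1 (ha r (hrc.mul_left _))).resolve_left fun h ↦ hqc (h ▸ hrc)

theorem exists_forall_mem_factoredElements (F : Finset M) :
    ∃ T : Finset {q : M // Prime q}, ∀ a ∈ F, a ≠ 0 → a ∈ factoredElements T := by
  classical
  refine ⟨(F.biUnion fun b ↦ (UniqueFactorizationMonoid.factors b).toFinset).subtype _,
    fun a haF ha ↦ ⟨ha, fun q hqa ↦ ?_⟩⟩
  obtain ⟨r, hr, hqr⟩ := UniqueFactorizationMonoid.exists_mem_factors_of_dvd ha q.2.irreducible hqa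
  rw [Finset.mem_subtype, associated_iff_eq.1 hqr]
  exact Finset.mem_biUnion.2 ⟨a, haF, Multiset.mem_toFinset.2 hr⟩

theorem hasSum_factoredElements {f : M →*₀ ℝ} (hf₀ : ∀ a, 0 ≤ f a)
    {T : Finset {q : M // Prime q}} (hf₁ : ∀ q ∈ T, f q < 1) :
    HasSum (fun a : factoredElements T ↦ f a) (∏ q ∈ T, (1 - f q)⁻¹) := by
  classical
  have : Nontrivial M := domain_nontrivial f (map_zero f) (map_one f)
  induction T using Finset.induction_on with
  | empty =>
    rw [factoredElements_empty, Finset.prod_empty, ← map_one f]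
    exact hasSum_unique (fun a : ({1} : Set M) ↦ f a)
  | insert q T hqT ih =>
    rw [Finset.forall_mem_insert] at hf₁
    have hgeom := hasSum_geometric_of_lt_one (hf₀ q) hf₁.1
    have hfac := ih hf₁.2
    rw [Finset.prod_insert hqT,
      ← (Equiv.ofBijective _ (bijective_pow_mul_factoredElements hqT)).hasSum_iff]
    refine (hgeom.mul hfac (hgeom.summable.mul_of_nonneg hfac.summable
      (fun k ↦ pow_nonneg (hf₀ q) k) fun a ↦ hf₀ a)).congr_fun ?_
    simp

theorem hasSum_neg_log_one_sub_prime {f : M →*₀ ℝ} (hf₀ : ∀ a, 0 ≤ f a) (hf : Summable f) :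
    HasSum (fun q : {q : M // Prime q} ↦ -Real.log (1 - f q)) (Real.log (∑' a, f a)) := by
  have hf₁ (q : {q : M // Prime q}) : f q < 1 := map_prime_lt_one_of_summable hf₀ hf q.2
  have hfac (T : Finset {q : M // Prime q}) : HasSum ((factoredElements T).indicator f)
      (Real.exp (∑ q ∈ T, -Real.log (1 - f q))) := by
    convert hasSum_subtype_iff_indicator.1 (hasSum_factoredElements hf₀ fun q _ ↦ hf₁ q)
    simp [Real.exp_sum, Real.exp_neg, Real.exp_log (sub_pos.2 (hf₁ _))]
  have hind (T : Finset {q : M // Prime q}) (a : M) : 0 ≤ (factoredElements T).indicator f a :=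
    Set.indicator_nonneg (fun a _ ↦ hf₀ a) a
  have hpos : 0 < ∑' a, f a := hf.tsum_pos hf₀ 1 (by simp)
  refine hasSum_of_isLUB_of_nonneg _
    (fun q ↦ neg_nonneg.2 (Real.log_nonpos (sub_pos.2 (hf₁ q)).le (sub_le_self 1 (hf₀ q))))
    ⟨?_, fun u hu ↦ ?_⟩
  · rintro _ ⟨T, rfl⟩
    rw [Real.le_log_iff_exp_le hpos, ← (hfac T).tsum_eq]
    exact (hfac T).summable.tsum_le_tsum (Set.indicator_le_self' fun a _ ↦ hf₀ a) hf
  · rw [Real.log_le_iff_le_exp hpos]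
    refine hf.tsum_le_of_sum_le fun F ↦ ?_
    obtain ⟨T, hT⟩ := exists_forall_mem_factoredElements F
    calc ∑ a ∈ F, f a ≤ ∑ a ∈ F, (factoredElements T).indicator f a := by
          refine Finset.sum_le_sum fun a ha ↦ ?_
          rcases eq_or_ne a 0 with rfl | ha₀
          · exact (map_zero f).trans_le (hind T 0)
          · rw [Set.indicator_of_mem (hT a ha ha₀)]
      _ ≤ Real.exp (∑ q ∈ T, -Real.log (1 - f q)) := sum_le_hasSum F (fun a _ ↦ hind T a) (hfac T)
      _ ≤ Real.exp u := Real.exp_le_exp.2 (hu ⟨T, rfl⟩)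

end EulerProduct

section LogSingularity

theorem natCast_rpow_neg_le_natCast_rpow_neg (n : ℕ) {s t : ℝ} (hs : 0 < s) (hst : s ≤ t) :
    (n : ℝ) ^ (-t) ≤ (n : ℝ) ^ (-s) := by
  rcases n.eq_zero_or_pos with rfl | hn
  · rw [Nat.cast_zero, Real.zero_rpow (by linarith), Real.zero_rpow (by linarith)]
  · exact Real.rpow_le_rpow_of_exponent_le (by exact_mod_cast hn) (by linarith)

theorem tendsto_neg_log_sub_one :
    Tendsto (fun s : ℝ ↦ -Real.log (s - 1)) (𝓝[>] 1) atTop := by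
  have hsub : Tendsto (fun s : ℝ ↦ s - 1) (𝓝[>] 1) (𝓝[>] 0) := by
    refine tendsto_nhdsWithin_of_tendsto_nhds_of_eventually_within _ ?_ ?_
    · exact ((continuous_sub_right (1 : ℝ)).tendsto' 1 0 (sub_self 1)).mono_left nhdsWithin_le_nhds
    · filter_upwards [self_mem_nhdsWithin] with s (hs : 1 < s) using sub_pos.2 hs
  exact tendsto_neg_atBot_atTop.comp (Real.tendsto_log_nhdsGT_zero.comp hsub)

theorem tendsto_div_neg_log_sub_one_of_bounded {F : ℝ → ℝ} (C : ℝ)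
    (hF : ∀ᶠ s in 𝓝[>] 1, |F s| ≤ C) :
    Tendsto (fun s ↦ F s / -Real.log (s - 1)) (𝓝[>] 1) (𝓝 0) := by
  simpa [div_eq_mul_inv] using
    bdd_le_mul_tendsto_zero' C hF tendsto_neg_log_sub_one.inv_tendsto_atTop

/-- The Dirichlet series with coefficients `f` converges at every real `s > 1` close to `1`, and
its sum is `c * log (1 / (s - 1)) + o(log (1 / (s - 1)))` as `s → 1⁺`. For the indicator function
of a set of primes, `c` is the Dirichlet density of that set. -/
def HasLogSingularity (f : ℕ → ℝ) (c : ℝ) : Prop :=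
  (∀ᶠ s : ℝ in 𝓝[>] 1, Summable fun n : ℕ ↦ f n * (n : ℝ) ^ (-s)) ∧
    Tendsto (fun s : ℝ ↦ (∑' n : ℕ, f n * (n : ℝ) ^ (-s)) / -Real.log (s - 1)) (𝓝[>] 1) (𝓝 c)

namespace HasLogSingularity

variable {f g : ℕ → ℝ} {c d : ℝ}

theorem add (hf : HasLogSingularity f c) (hg : HasLogSingularity g d) :
    HasLogSingularity (fun n ↦ f n + g n) (c + d) := by
  simp only [HasLogSingularity, add_mul]
  refine ⟨?_, (hf.2.add hg.2).congr' ?_⟩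
  · filter_upwards [hf.1, hg.1] with s hfs hgs using hfs.add hgs
  · filter_upwards [hf.1, hg.1] with s hfs hgs
    rw [hfs.tsum_add hgs, add_div]

theorem const_mul (a : ℝ) (hf : HasLogSingularity f c) :
    HasLogSingularity (fun n ↦ a * f n) (a * c) := by
  simp only [HasLogSingularity, mul_assoc, tsum_mul_left, mul_div_assoc]
  exact ⟨hf.1.mono fun s hfs ↦ hfs.mul_left a, hf.2.const_mul a⟩

theorem sub (hf : HasLogSingularity f c) (hg : HasLogSingularity g d) :
    HasLogSingularity (fun n ↦ f n - g n) (c - d) := by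
  simpa [sub_eq_add_neg] using hf.add (hg.const_mul (-1))

theorem of_summable_div (hf : Summable fun n ↦ f n / n) : HasLogSingularity f 0 := by
  have hle (s : ℝ) (hs : 1 < s) (n : ℕ) : ‖f n * (n : ℝ) ^ (-s)‖ ≤ ‖f n / n‖ := by
    rw [div_eq_mul_inv, norm_mul, norm_mul]
    gcongr
    rw [← Real.rpow_neg_one, Real.norm_of_nonneg (by positivity),
      Real.norm_of_nonneg (by positivity)]
    exact natCast_rpow_neg_le_natCast_rpow_neg n one_pos hs.le
  refine ⟨?_, tendsto_div_neg_log_sub_one_of_bounded (∑' n, ‖f n / n‖) ?_⟩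
  · filter_upwards [self_mem_nhdsWithin] with s hs using .of_norm_bounded hf.norm (hle s hs)
  · filter_upwards [self_mem_nhdsWithin] with s hs
    exact tsum_of_norm_bounded hf.norm.hasSum (hle s hs)

theorem nonneg (hf : HasLogSingularity f c) (h : ∀ n, 0 ≤ f n) : 0 ≤ c := by
  refine ge_of_tendsto hf.2 ?_
  filter_upwards [tendsto_neg_log_sub_one.eventually_ge_atTop 0] with s hs
  exact div_nonneg (tsum_nonneg fun n ↦ mul_nonneg (h n) (by positivity)) hs

theorem le_of_eventually_le (hf : HasLogSingularity f c) (hg : HasLogSingularity g d)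
    (h : f ≤ᶠ[atTop] g) : c ≤ d := by
  have hexc : HasLogSingularity (fun n ↦ max 0 (f n - g n)) 0 := by
    refine of_summable_div (summable_of_hasFiniteSupport ?_)
    rw [← Nat.cofinite_eq_atTop] at h
    refine h.subset fun n hn (hfg : f n ≤ g n) ↦ hn ?_
    simp [max_eq_left (sub_nonpos.2 hfg)]
  have := ((hg.sub hf).add hexc).nonneg fun n ↦ by
    linarith [le_max_right 0 (f n - g n)]
  linarith

end HasLogSingularity

variable {ι : Type*} {N : ι → ℕ}

theorem hasSum_comp_iff_hasSum_card_fiber_mul (hN : ∀ n, Finite {i // N i = n}) {w : ℕ → ℝ}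
    (hw : ∀ n, 0 ≤ w n) {a : ℝ} :
    HasSum (fun i ↦ w (N i)) a ↔ HasSum (fun n ↦ Nat.card {i // N i = n} * w n) a := by
  have hfib (n : ℕ) :
      HasSum (fun i : {i // N i = n} ↦ w (N i)) (Nat.card {i // N i = n} * w n) := by
    have := Fintype.ofFinite {i // N i = n}
    have hconst : (fun i : {i // N i = n} ↦ w (N i)) = fun _ ↦ w n := funext fun i ↦ by rw [i.2]
    rw [hconst]
    simpa using hasSum_fintype fun _ : {i // N i = n} ↦ w n
  rw [← (Equiv.sigmaFiberEquiv N).hasSum_iff]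
  refine ⟨fun h ↦ h.sigma hfib, fun h ↦ h.sigma_of_hasSum hfib ?_⟩
  exact (summable_sigma_of_nonneg fun x ↦ hw _).2
    ⟨fun n ↦ (hfib n).summable, h.summable.congr fun n ↦ (hfib n).tsum_eq.symm⟩

theorem summable_comp_iff_summable_card_fiber_mul (hN : ∀ n, Finite {i // N i = n}) {w : ℕ → ℝ}
    (hw : ∀ n, 0 ≤ w n) :
    (Summable fun i ↦ w (N i)) ↔ Summable fun n ↦ Nat.card {i // N i = n} * w n :=
  exists_congr fun _ ↦ hasSum_comp_iff_hasSum_card_fiber_mul hN hw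

theorem hasLogSingularity_card_fiber (hN : ∀ n, Finite {i // N i = n}) {c : ℝ}
    (hsum : ∀ᶠ s : ℝ in 𝓝[>] 1, Summable fun i ↦ (N i : ℝ) ^ (-s))
    (hlim : Tendsto (fun s : ℝ ↦ (∑' i, (N i : ℝ) ^ (-s)) / -Real.log (s - 1)) (𝓝[>] 1) (𝓝 c)) :
    HasLogSingularity (fun n ↦ Nat.card {i // N i = n}) c := by
  have hiff (s a : ℝ) : HasSum (fun i ↦ (N i : ℝ) ^ (-s)) a ↔
      HasSum (fun n : ℕ ↦ Nat.card {i // N i = n} * (n : ℝ) ^ (-s)) a :=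
    hasSum_comp_iff_hasSum_card_fiber_mul (w := fun n ↦ (n : ℝ) ^ (-s)) hN fun n ↦ by positivity
  refine ⟨hsum.mono fun s hs ↦ ((hiff s _).1 hs.hasSum).summable, hlim.congr fun s ↦ ?_⟩
  rw [tsum_eq_tsum_of_hasSum_iff_hasSum (hiff s _)]

end LogSingularity

section PrimeZeta

theorem abs_neg_log_one_sub_sub_le {x : ℝ} (hx₀ : 0 ≤ x) (hx : x ≤ 1 / 2) :
    |-Real.log (1 - x) - x| ≤ 2 * x ^ 2 := by
  have h := Real.abs_log_sub_add_sum_range_le (abs_lt.2 ⟨by linarith, by linarith⟩ : |x| < 1) 1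
  rw [abs_of_nonneg hx₀] at h
  calc |-Real.log (1 - x) - x| = |x + Real.log (1 - x)| := by rw [← abs_neg]; ring_nf
    _ ≤ x ^ 2 / (1 - x) := by simpa using h
    _ ≤ 2 * x ^ 2 := by rw [div_le_iff₀ (by linarith)]; nlinarith [sq_nonneg x]

theorem abs_neg_log_one_sub_natCast_rpow_sub_le {n : ℕ} {s : ℝ} (hs : 1 < s)
    (hn : (n : ℝ) ^ (-s) < 1) :
    |-Real.log (1 - (n : ℝ) ^ (-s)) - (n : ℝ) ^ (-s)| ≤ 2 * (n : ℝ) ^ (-2 : ℝ) := by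
  have hle : (n : ℝ) ^ (-s) ≤ (n : ℝ)⁻¹ := by
    simpa [Real.rpow_neg_one] using natCast_rpow_neg_le_natCast_rpow_neg n one_pos hs.le
  have hhalf : (n : ℝ) ^ (-s) ≤ 1 / 2 := by
    have hn₁ : n ≠ 1 := by rintro rfl; simp at hn
    rcases n.eq_zero_or_pos with rfl | hn₀
    · simpa using hle.trans (by norm_num)
    · exact hle.trans (by rw [one_div]; exact inv_anti₀ two_pos (by norm_cast; omega))
  calc |-Real.log (1 - (n : ℝ) ^ (-s)) - (n : ℝ) ^ (-s)|
      ≤ 2 * ((n : ℝ) ^ (-s)) ^ 2 := abs_neg_log_one_sub_sub_le (by positivity) hhalf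
    _ ≤ 2 * (n : ℝ)⁻¹ ^ 2 := by gcongr
    _ = 2 * (n : ℝ) ^ (-2 : ℝ) := by rw [Real.rpow_neg (by positivity), inv_pow, Real.rpow_two]

variable {M : Type*} [CommMonoidWithZero M] {N : M →*₀ ℕ}

/-- The multiplicative function `a ↦ N a ^ (-s)`, whose sum over `M` is a zeta function. -/
noncomputable def rpowNegHom (N : M →*₀ ℕ) {s : ℝ} (hs : s ≠ 0) : M →*₀ ℝ where
  toFun a := (N a : ℝ) ^ (-s)
  map_zero' := by simp [hs]
  map_one' := by simp
  map_mul' a b := by simp [Real.mul_rpow]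

variable [UniqueFactorizationMonoid M] [Subsingleton Mˣ]

theorem abs_log_tsum_sub_tsum_prime_le {s : ℝ} (hs : 1 < s)
    (h : Summable fun a ↦ (N a : ℝ) ^ (-s)) (h₂ : Summable fun a ↦ (N a : ℝ) ^ (-2 : ℝ)) :
    |Real.log (∑' a, (N a : ℝ) ^ (-s)) - ∑' q : {q : M // Prime q}, (N q : ℝ) ^ (-s)| ≤
      ∑' q : {q : M // Prime q}, 2 * (N q : ℝ) ^ (-2 : ℝ) := by
  let w : M →*₀ ℝ := rpowNegHom N (by linarith : s ≠ 0)
  have hw (a : M) : 0 ≤ w a := Real.rpow_nonneg (Nat.cast_nonneg _) _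
  have hdiff := (hasSum_neg_log_one_sub_prime hw h).sub (h.subtype {q | Prime q}).hasSum
  refine hdiff.norm_le_of_bounded ((h₂.subtype {q | Prime q}).mul_left 2).hasSum fun q ↦ ?_
  exact abs_neg_log_one_sub_natCast_rpow_sub_le hs (map_prime_lt_one_of_summable hw h q.2)

theorem hasLogSingularity_card_prime
    (hN : ∀ n, Finite {q : {q : M // Prime q} // N q = n}) {ρ : ℝ} (hρ : ρ ≠ 0)
    (hres : Tendsto (fun s : ℝ ↦ (s - 1) * ∑' a, (N a : ℝ) ^ (-s)) (𝓝[>] 1) (𝓝 ρ)) :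
    HasLogSingularity (fun n ↦ Nat.card {q : {q : M // Prime q} // N q = n}) 1 := by
  have hne : ∀ᶠ s : ℝ in 𝓝[>] 1, (s - 1) * ∑' a, (N a : ℝ) ^ (-s) ≠ 0 := hres.eventually_ne hρ
  have hsum : ∀ᶠ s : ℝ in 𝓝[>] 1, Summable fun a ↦ (N a : ℝ) ^ (-s) :=
    hne.mono fun s hs ↦ not_imp_comm.1 tsum_eq_zero_of_not_summable (right_ne_zero_of_mul hs)
  have hsum₂ : Summable fun a ↦ (N a : ℝ) ^ (-2 : ℝ) := by
    obtain ⟨s, hs, hs₁, hs₂⟩ := (hsum.and (Ioo_mem_nhdsGT one_lt_two)).exists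
    exact hs.of_nonneg_of_le (fun a ↦ by positivity) fun a ↦
      natCast_rpow_neg_le_natCast_rpow_neg _ (by linarith) hs₂.le
  refine hasLogSingularity_card_fiber hN (hsum.mono fun s hs ↦ hs.subtype {q | Prime q}) ?_
  have hlog : Tendsto (fun s : ℝ ↦ Real.log (∑' a, (N a : ℝ) ^ (-s)) / -Real.log (s - 1))
      (𝓝[>] 1) (𝓝 1) := by
    have h := ((hres.log hρ).div_atTop tendsto_neg_log_sub_one).add_const 1
    rw [zero_add] at h
    refine h.congr' ?_
    filter_upwards [hne, tendsto_neg_log_sub_one.eventually_ne_atTop 0] with s hs hs₀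
    rw [Real.log_mul (left_ne_zero_of_mul hs) (right_ne_zero_of_mul hs),
      div_add_one hs₀, add_neg_cancel_comm]
  have hdiff := tendsto_div_neg_log_sub_one_of_bounded
    (F := fun s ↦ Real.log (∑' a, (N a : ℝ) ^ (-s)) - ∑' q : {q : M // Prime q}, (N q : ℝ) ^ (-s))
    (∑' q : {q : M // Prime q}, 2 * (N q : ℝ) ^ (-2 : ℝ)) (by
      filter_upwards [hsum, self_mem_nhdsWithin] with s hs hs₁
      exact abs_log_tsum_sub_tsum_prime_le hs₁ hs hsum₂)
  simpa [← sub_div] using hlog.sub hdiff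

end PrimeZeta

section PrimeIdealCount

theorem hasLogSingularity_indicator_prime : HasLogSingularity ({p | p.Prime}.indicator 1) 1 := by
  have hcard (n : ℕ) : (Nat.card {q : {q : ℕ // Prime q} // MonoidWithZeroHom.id ℕ q = n} : ℝ) =
      {p | p.Prime}.indicator 1 n := by
    by_cases hn : n.Prime
    · have : Unique {q : {q : ℕ // Prime q} // MonoidWithZeroHom.id ℕ q = n} :=
        ⟨⟨⟨⟨n, hn.prime⟩, rfl⟩⟩, fun q ↦ Subtype.ext (Subtype.ext q.2)⟩
      simpa [hn] using Nat.card_unique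
        (α := {q : {q : ℕ // Prime q} // MonoidWithZeroHom.id ℕ q = n})
    · have : IsEmpty {q : {q : ℕ // Prime q} // MonoidWithZeroHom.id ℕ q = n} :=
        ⟨fun q ↦ hn (q.2 ▸ q.1.2.nat_prime)⟩
      simpa [hn] using Nat.card_of_isEmpty
        (α := {q : {q : ℕ // Prime q} // MonoidWithZeroHom.id ℕ q = n})
  have hN (n : ℕ) : Finite {q : {q : ℕ // Prime q} // MonoidWithZeroHom.id ℕ q = n} := by
    have : Subsingleton {q : {q : ℕ // Prime q} // MonoidWithZeroHom.id ℕ q = n} :=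
      ⟨fun q r ↦ Subtype.ext (Subtype.ext (q.2.trans r.2.symm))⟩
    infer_instance
  have h := hasLogSingularity_card_prime hN one_ne_zero
    (by simpa [Real.rpow_neg] using tendsto_sub_mul_tsum_nat_rpow)
  simpa only [hcard] using h

variable (K : Type*) [Field K] [NumberField K]

/-- The number of prime ideals of `𝓞 K` of absolute norm `n`. -/
noncomputable def primeIdealCount (n : ℕ) : ℕ :=
  Nat.card {P : {P : Ideal (𝓞 K) // Prime P} // Ideal.absNorm P.1 = n}

theorem finite_prime_absNorm_eq (n : ℕ) :
    Finite {P : {P : Ideal (𝓞 K) // Prime P} // Ideal.absNorm P.1 = n} := by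
  have : Finite {I : Ideal (𝓞 K) | Ideal.absNorm I = n} := Ideal.finite_setOfPred_absNorm_eq n
  exact Finite.of_injective
    (fun P ↦ (⟨P.1.1, P.2⟩ : {I : Ideal (𝓞 K) | Ideal.absNorm I = n}))
    fun P Q h ↦ Subtype.ext (Subtype.ext (congrArg (fun I ↦ I.1) h))

theorem dedekindZeta_eq_tsum_absNorm {s : ℝ} (hs : s ≠ 0) :
    dedekindZeta K s = (∑' I : Ideal (𝓞 K), (Ideal.absNorm I : ℝ) ^ (-s) : ℝ) := by
  have hfin := Ideal.finite_setOfPred_absNorm_eq (S := 𝓞 K)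
  rw [tsum_eq_tsum_of_hasSum_iff_hasSum (hasSum_comp_iff_hasSum_card_fiber_mul
    (w := fun n ↦ (n : ℝ) ^ (-s)) hfin fun n ↦ by positivity), Complex.ofReal_tsum, dedekindZeta,
    LSeries]
  refine tsum_congr fun n ↦ ?_
  rcases eq_or_ne n 0 with rfl | hn
  · simp [hs]
  · rw [LSeries.term_of_ne_zero hn]
    simp [div_eq_mul_inv, Real.rpow_neg, Complex.ofReal_cpow]

theorem tendsto_sub_one_mul_tsum_absNorm_rpow :
    Tendsto (fun s : ℝ ↦ (s - 1) * ∑' I : Ideal (𝓞 K), (Ideal.absNorm I : ℝ) ^ (-s)) (𝓝[>] 1)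
      (𝓝 (dedekindZeta_residue K)) := by
  rw [← Complex.ofReal_re (dedekindZeta_residue K)]
  refine ((Complex.continuous_re.tendsto _).comp
    (tendsto_sub_one_mul_dedekindZeta_nhdsGT K)).congr' ?_
  filter_upwards [self_mem_nhdsWithin] with s (hs : 1 < s)
  rw [Function.comp_apply, dedekindZeta_eq_tsum_absNorm K (by linarith)]
  norm_cast

theorem hasLogSingularity_primeIdealCount :
    HasLogSingularity (fun n ↦ primeIdealCount K n) 1 :=
  hasLogSingularity_card_prime (N := Ideal.absNorm) (finite_prime_absNorm_eq K)
    (dedekindZeta_residue_ne_zero K) (tendsto_sub_one_mul_tsum_absNorm_rpow K)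

variable {K}

-- The norm of a prime ideal is a prime power, so its `minFac` is the prime number below the ideal.
theorem natCast_minFac_absNorm_mem {P : Ideal (𝓞 K)} (hP : Prime P) :
    ((Ideal.absNorm P).minFac : 𝓞 K) ∈ P := by
  have := (Ideal.isPrime_of_prime hP).isMaximal hP.ne_zero
  obtain ⟨p, k, hk, hpP, hp, hN⟩ := Ideal.exists_prime_and_absNorm_eq_pow P
  rwa [hN, hp.pow_minFac hk.ne']

theorem prime_minFac_absNorm {P : Ideal (𝓞 K)} (hP : Prime P) : (Ideal.absNorm P).minFac.Prime :=
  Nat.minFac_prime (mt Ideal.absNorm_eq_one_iff.1 (Ideal.isPrime_of_prime hP).ne_top)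

theorem card_le_finrank_of_minFac_absNorm_eq {p : ℕ}
    (T : Finset {P : {P : Ideal (𝓞 K) // Prime P} // (Ideal.absNorm P.1).minFac = p}) :
    T.card ≤ Module.finrank ℚ K := by
  rcases T.eq_empty_or_nonempty with rfl | ⟨P, -⟩
  · simp
  have hp : p.Prime := P.2 ▸ prime_minFac_absNorm P.1.2
  have hdvd : ∏ P ∈ T, P.1.1 ∣ Ideal.span {(p : 𝓞 K)} := by
    let e : {P : {P : Ideal (𝓞 K) // Prime P} // (Ideal.absNorm P.1).minFac = p} ↪ Ideal (𝓞 K) :=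
      (Function.Embedding.subtype _).trans (.subtype _)
    rw [show ∏ P ∈ T, P.1.1 = ∏ Q ∈ T.map e, Q from (Finset.prod_map T e id).symm]
    refine Finset.prod_primes_dvd _ ?_ ?_
    · intro Q hQ
      obtain ⟨P, -, rfl⟩ := Finset.mem_map.1 hQ
      exact P.1.2
    · intro Q hQ
      obtain ⟨P, -, rfl⟩ := Finset.mem_map.1 hQ
      have hmem := natCast_minFac_absNorm_mem P.1.2
      rw [P.2] at hmem
      exact Ideal.dvd_span_singleton.2 hmem
  have hpow : p ^ T.card ∣ p ^ Module.finrank ℚ K := by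
    calc p ^ T.card = ∏ _P ∈ T, p := (Finset.prod_const p).symm
      _ ∣ ∏ P ∈ T, Ideal.absNorm P.1.1 :=
        Finset.prod_dvd_prod_of_dvd _ _ fun P _ ↦ P.2.symm.dvd.trans (Nat.minFac_dvd _)
      _ = Ideal.absNorm (∏ P ∈ T, P.1.1) := (map_prod _ _ _).symm
      _ ∣ Ideal.absNorm (Ideal.span {(p : 𝓞 K)}) := map_dvd _ hdvd
      _ = p ^ Module.finrank ℚ K := by
        rw [Ideal.absNorm_span_natCast, RingOfIntegers.rank]
  exact (Nat.pow_dvd_pow_iff_le_right hp.one_lt).1 hpow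

theorem finite_minFac_absNorm_eq (p : ℕ) :
    Finite {P : {P : Ideal (𝓞 K) // Prime P} // (Ideal.absNorm P.1).minFac = p} :=
  (fintypeOfFinsetCardLe _ card_le_finrank_of_minFac_absNorm_eq).finite

theorem natCard_minFac_absNorm_eq_le_finrank (p : ℕ) :
    Nat.card {P : {P : Ideal (𝓞 K) // Prime P} // (Ideal.absNorm P.1).minFac = p} ≤
      Module.finrank ℚ K := by
  have := fintypeOfFinsetCardLe _ (card_le_finrank_of_minFac_absNorm_eq (K := K) (p := p))
  rw [Nat.card_eq_fintype_card]
  exact card_le_finrank_of_minFac_absNorm_eq Finset.univ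

theorem primeIdealCount_le_finrank {p : ℕ} (hp : p.Prime) :
    primeIdealCount K p ≤ Module.finrank ℚ K := by
  have := finite_minFac_absNorm_eq (K := K) p
  refine le_trans ?_ (natCard_minFac_absNorm_eq_le_finrank p)
  exact Nat.card_le_card_of_injective (fun P ↦ ⟨P.1, by rw [P.2, hp.minFac_eq]⟩) fun P Q h ↦
    Subtype.ext (congrArg (fun R ↦ R.1) h)

variable (K)

theorem summable_inv_minFac_absNorm_sq :
    Summable fun P : {P : Ideal (𝓞 K) // Prime P} ↦
      (((Ideal.absNorm P.1).minFac : ℝ) ^ 2)⁻¹ := by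
  refine (summable_comp_iff_summable_card_fiber_mul
    (w := fun p ↦ ((p : ℝ) ^ 2)⁻¹) finite_minFac_absNorm_eq fun p ↦ by positivity).2 ?_
  refine .of_nonneg_of_le (fun p ↦ by positivity) (fun p ↦ ?_)
    ((Real.summable_nat_pow_inv.2 one_lt_two).mul_left (Module.finrank ℚ K : ℝ))
  gcongr
  exact natCard_minFac_absNorm_eq_le_finrank p

theorem summable_indicator_not_prime_primeIdealCount_div :
    Summable fun n ↦ {n | ¬ n.Prime}.indicator (fun n ↦ (primeIdealCount K n : ℝ)) n / n := by
  let w : ℕ → ℝ := {n | ¬ n.Prime}.indicator fun n ↦ (n : ℝ)⁻¹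
  have hw (n : ℕ) : 0 ≤ w n := Set.indicator_nonneg (fun n _ ↦ by positivity) n
  have hsum : Summable fun P : {P : Ideal (𝓞 K) // Prime P} ↦ w (Ideal.absNorm P.1) := by
    refine .of_nonneg_of_le (fun P ↦ hw _) (fun P ↦ ?_) (summable_inv_minFac_absNorm_sq K)
    refine Set.indicator_apply_le' (fun hP ↦ ?_) fun _ ↦ by positivity
    have hpos : 0 < Ideal.absNorm P.1 :=
      Nat.pos_of_ne_zero (mt Ideal.absNorm_eq_zero_iff.1 P.2.ne_zero)
    have hminFac := (prime_minFac_absNorm P.2).pos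
    gcongr
    exact_mod_cast Nat.minFac_sq_le_self hpos hP
  refine ((summable_comp_iff_summable_card_fiber_mul
    (finite_prime_absNorm_eq K) hw).1 hsum).congr fun n ↦ ?_
  by_cases hn : n.Prime <;> simp [w, hn, primeIdealCount, div_eq_mul_inv]

theorem hasLogSingularity_indicator_prime_primeIdealCount :
    HasLogSingularity ({p | p.Prime}.indicator fun p ↦ (primeIdealCount K p : ℝ)) 1 := by
  have h := (hasLogSingularity_primeIdealCount K).sub
    (.of_summable_div (summable_indicator_not_prime_primeIdealCount_div K))
  rw [sub_zero] at h
  convert h using 1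
  ext n
  by_cases hn : n.Prime <;> simp [hn]

theorem frequently_primeIdealCount_eq_zero (L : Type*) [Field L] [NumberField L]
    (h : ∀ᶠ p in atTop, p.Prime → primeIdealCount L p ≠ 0 → 2 ≤ primeIdealCount K p) :
    ∃ᶠ p in atTop, p.Prime ∧ primeIdealCount K p = 0 := by
  intro hK
  have hn : (0 : ℝ) < Module.finrank ℚ L := by exact_mod_cast Module.finrank_pos
  have hlower := hasLogSingularity_indicator_prime.add
    ((hasLogSingularity_indicator_prime_primeIdealCount L).const_mul (Module.finrank ℚ L : ℝ)⁻¹)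
  refine (hlower.le_of_eventually_le (hasLogSingularity_indicator_prime_primeIdealCount K)
    ?_).not_gt (by simpa using hn)
  filter_upwards [hK, h] with p hKp hp
  by_cases hprime : p.Prime
  · have hL : (Module.finrank ℚ L : ℝ)⁻¹ * primeIdealCount L p ≤ 1 := by
      rw [inv_mul_le_one₀ hn]
      exact_mod_cast primeIdealCount_le_finrank hprime
    have hKpos : 1 ≤ primeIdealCount K p := Nat.one_le_iff_ne_zero.2 fun h₀ ↦ hKp ⟨hprime, h₀⟩
    simp only [Set.indicator_of_mem (show p ∈ {p : ℕ | p.Prime} from hprime), Pi.one_apply]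
    rcases eq_or_ne (primeIdealCount L p) 0 with h₀ | h₀
    · simpa [h₀] using hKpos
    · have : (2 : ℝ) ≤ primeIdealCount K p := by exact_mod_cast hp hprime h₀
      linarith
  · simp [hprime]

end PrimeIdealCount

section Exponent

variable {K : Type*} [Field K] [NumberField K] {θ : 𝓞 K}

theorem intCast_mem_conductor_of_eq_discr {pb : PowerBasis ℚ K} (hpb : pb.gen = θ) {d : ℤ}
    (hd : (d : ℚ) = Algebra.discr ℚ pb.basis) : (d : 𝓞 K) ∈ conductor ℤ θ := by
  refine mem_conductor_iff.2 fun b ↦ ?_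
  have hint : IsIntegral ℤ pb.gen := hpb ▸ θ.isIntegral_coe
  have hmem := Algebra.discr_mul_isIntegral_mem_adjoin ℚ hint b.isIntegral_coe
  have hadjoin : Algebra.adjoin ℤ {(θ : K)} =
      (Algebra.adjoin ℤ {θ}).map (IsScalarTower.toAlgHom ℤ (𝓞 K) K) := by
    simp [AlgHom.map_adjoin]
  rw [← hd, hpb, hadjoin] at hmem
  obtain ⟨y, hy, hyb⟩ := hmem
  have : y = d * b := RingOfIntegers.ext <| by
    simpa [Algebra.smul_def] using hyb
  rwa [← this]

theorem exponent_ne_zero {pb : PowerBasis ℚ K} (hpb : pb.gen = θ) :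
    RingOfIntegers.exponent θ ≠ 0 := by
  have hint : IsIntegral ℤ (Algebra.discr ℚ pb.basis) := by
    refine Algebra.discr_isIntegral ℚ fun i ↦ ?_
    rw [PowerBasis.basis_eq_pow, hpb]
    exact θ.isIntegral_coe.pow _
  obtain ⟨d, hd⟩ := IsIntegrallyClosed.isIntegral_iff.1 hint
  have hd₀ : d ≠ 0 := by
    rintro rfl
    exact Algebra.discr_not_zero_of_basis ℚ pb.basis (by simpa using hd.symm)
  have hmem : d ∈ Ideal.under ℤ (conductor ℤ θ) := by
    simpa [Ideal.mem_comap, Ideal.under_def] using intCast_mem_conductor_of_eq_discr hpb hd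
  rw [RingOfIntegers.exponent, Ne, Ideal.absNorm_eq_zero_iff]
  exact fun hbot ↦ hd₀ (by simpa [hbot] using hmem)

end Exponent

section RootsModPrime

theorem isRoot_map_of_aeval_eq_zero {R S : Type*} [CommRing R] [CommRing S] (φ : R →+* S)
    {f : ℤ[X]} {a : R} (ha : aeval a f = 0) : (f.map (Int.castRingHom S)).IsRoot (φ a) := by
  have h := congrArg φ ha
  rw [aeval_def, hom_eval₂, map_zero] at h
  rw [IsRoot, eval_map, ← h, RingHom.ext_int (Int.castRingHom S) (φ.comp _)]

variable {K : Type*} [Field K] {p : ℕ} [Fact p.Prime]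

theorem X_sub_C_mem_monicFactorsMod {θ : 𝓞 K} {x : ZMod p}
    (hx : ((minpoly ℤ θ).map (Int.castRingHom (ZMod p))).IsRoot x) :
    X - C x ∈ RingOfIntegers.monicFactorsMod θ p := by
  classical
  rw [RingOfIntegers.monicFactorsMod, Multiset.mem_toFinset,
    Polynomial.mem_normalizedFactors_iff (map_monic_ne_zero (minpoly.monic θ.isIntegral))]
  exact ⟨irreducible_X_sub_C x, monic_X_sub_C x, dvd_iff_isRoot.2 hx⟩

variable [NumberField K]

theorem absNorm_primesOverSpanEquivMonicFactorsMod_symm {θ : 𝓞 K}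
    (hθ : ¬ p ∣ RingOfIntegers.exponent θ) {x : ZMod p}
    (hx : X - C x ∈ RingOfIntegers.monicFactorsMod θ p) :
    Ideal.absNorm ((Ideal.primesOverSpanEquivMonicFactorsMod hθ).symm ⟨X - C x, hx⟩ :
      Ideal (𝓞 K)) = p := by
  have hdeg := Ideal.inertiaDeg_primesOverSpanEquivMonicFactorsMod_symm_apply' hθ hx
  generalize (Ideal.primesOverSpanEquivMonicFactorsMod hθ).symm ⟨X - C x, hx⟩ = P at hdeg ⊢
  have := P.2.1
  have := P.2.2
  rw [Ideal.absNorm_eq_pow_inertiaDeg' P.1 (Fact.out : p.Prime), Ideal.inertiaDeg'_eq_inertiaDeg,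
    hdeg, natDegree_X_sub_C, pow_one]

theorem natCard_isRoot_le_primeIdealCount {θ : 𝓞 K} (hθ : ¬ p ∣ RingOfIntegers.exponent θ) :
    Nat.card {x : ZMod p // ((minpoly ℤ θ).map (Int.castRingHom (ZMod p))).IsRoot x} ≤
      primeIdealCount K p := by
  let e := (Ideal.primesOverSpanEquivMonicFactorsMod hθ).symm
  have := finite_prime_absNorm_eq K p
  have hN x hx := absNorm_primesOverSpanEquivMonicFactorsMod_symm hθ (x := x) hx
  refine Nat.card_le_card_of_injective
    (fun x ↦ ⟨⟨e ⟨X - C x.1, X_sub_C_mem_monicFactorsMod x.2⟩, ?_⟩, hN _ _⟩) fun x y hxy ↦ ?_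
  · refine Ideal.prime_of_isPrime (mt Ideal.absNorm_eq_zero_iff.2 ?_) (e _).2.1
    rw [hN]
    exact NeZero.ne p
  · have := e.injective (Subtype.ext (congrArg (fun P ↦ P.1.1) hxy))
    exact Subtype.ext (C_injective (sub_right_injective (congrArg Subtype.val this)))

theorem exists_ker_eq_of_absNorm_eq {Q : Ideal (𝓞 K)} (hQ : Ideal.absNorm Q = p) :
    ∃ φ : 𝓞 K →+* ZMod p, RingHom.ker φ = Q := by
  have hcard : Nat.card (𝓞 K ⧸ Q) = p := hQ
  have : Finite (𝓞 K ⧸ Q) := Nat.finite_of_card_ne_zero (hcard ▸ NeZero.ne p)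
  have := Fintype.ofFinite (𝓞 K ⧸ Q)
  let e := ZMod.ringEquivOfPrime (𝓞 K ⧸ Q) Fact.out (Nat.card_eq_fintype_card.symm.trans hcard)
  refine ⟨(e.symm : 𝓞 K ⧸ Q →+* ZMod p).comp (Ideal.Quotient.mk Q), ?_⟩
  rw [RingHom.ker_comp_of_injective _ e.symm.injective, Ideal.mk_ker]

theorem two_le_natCard_isRoot_of_primeIdealCount_ne_zero {f : ℤ[X]} {α β : 𝓞 K}
    (hα : aeval α f = 0) (hβ : aeval β f = 0)
    (hαβ : ¬ p ∣ Ideal.absNorm (Ideal.span {α - β})) (hp : primeIdealCount K p ≠ 0) :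
    2 ≤ Nat.card {x : ZMod p // (f.map (Int.castRingHom (ZMod p))).IsRoot x} := by
  obtain ⟨⟨Q, -⟩, hQ : Ideal.absNorm Q = p⟩ := (Nat.card_ne_zero.1 hp).1
  obtain ⟨φ, hφ⟩ := exists_ker_eq_of_absNorm_eq hQ
  refine Finite.one_lt_card_iff_nontrivial.2
    ⟨⟨φ α, isRoot_map_of_aeval_eq_zero φ hα⟩, ⟨φ β, isRoot_map_of_aeval_eq_zero φ hβ⟩, fun h ↦ ?_⟩
  have hmem : α - β ∈ Q := by
    rw [← hφ, RingHom.mem_ker, map_sub, sub_eq_zero]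
    exact congrArg Subtype.val h
  refine hαβ ?_
  conv_lhs => rw [← hQ]
  exact Ideal.absNorm_dvd_absNorm_of_le ((Ideal.span_singleton_le_iff_mem Q).2 hmem)

end RootsModPrime

section NumberFieldOfPolynomial

variable {f : ℤ[X]}

theorem exists_coe_eq_and_aeval_eq_zero {K : Type*} [Field K] [NumberField K] (hf : f.Monic)
    {x : K} (hx : aeval x (f.map (algebraMap ℤ ℚ)) = 0) :
    ∃ θ : 𝓞 K, (θ : K) = x ∧ aeval θ f = 0 := by
  rw [aeval_map_algebraMap] at hx
  let θ : 𝓞 K := ⟨x, f, hf, hx⟩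
  exact ⟨θ, rfl, (aeval_algebraMap_eq_zero_iff K θ f).1 hx⟩

theorem exists_minpoly_eq_and_exponent_ne_zero (hf : f.Monic) (hirr : Irreducible f) :
    ∃ (K : Type) (_ : Field K) (_ : NumberField K) (θ : 𝓞 K),
      minpoly ℤ θ = f ∧ RingOfIntegers.exponent θ ≠ 0 := by
  let g := f.map (algebraMap ℤ ℚ)
  have hg : Irreducible g := hf.irreducible_iff_irreducible_map_fraction_map.1 hirr
  have := Fact.mk hg
  let pb := AdjoinRoot.powerBasis hg.ne_zero
  have : Module.Finite ℚ (AdjoinRoot g) := pb.finite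
  have : NumberField (AdjoinRoot g) := { }
  have hroot : aeval pb.gen g = 0 := by
    rw [AdjoinRoot.powerBasis_gen, aeval_def, ← AdjoinRoot.eval₂_root g,
      RingHom.ext_rat (algebraMap ℚ _) (AdjoinRoot.of g)]
  obtain ⟨θ, hθ, hθ₀⟩ := exists_coe_eq_and_aeval_eq_zero hf hroot
  refine ⟨_, _, this, θ, ?_, exponent_ne_zero hθ.symm⟩
  have hdvd := minpoly.isIntegrallyClosed_dvd θ.isIntegral hθ₀
  refine eq_of_monic_of_associated (minpoly.monic θ.isIntegral) hf ?_
  exact (minpoly.irreducible θ.isIntegral).associated_of_dvd hirr hdvd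

theorem exists_ne_and_aeval_eq_zero (hf : f.Monic)
    (hsep : (f.map (algebraMap ℤ ℚ)).Separable) (hdeg : 2 ≤ f.natDegree) :
    ∃ (L : Type) (_ : Field L) (_ : NumberField L) (α β : 𝓞 L),
      α ≠ β ∧ aeval α f = 0 ∧ aeval β f = 0 := by
  let g := f.map (algebraMap ℤ ℚ)
  have : NumberField g.SplittingField := { }
  have hcard := card_rootSet_eq_natDegree hsep (SplittingField.splits g)
  rw [hf.natDegree_map] at hcard
  obtain ⟨a, b, hab⟩ := Fintype.one_lt_card_iff.1 (hdeg.trans hcard.ge)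
  obtain ⟨α, hα, hα₀⟩ := exists_coe_eq_and_aeval_eq_zero hf (mem_rootSet.1 a.2).2
  obtain ⟨β, hβ, hβ₀⟩ := exists_coe_eq_and_aeval_eq_zero hf (mem_rootSet.1 b.2).2
  refine ⟨_, _, this, α, β, ?_, hα₀, hβ₀⟩
  rintro rfl
  exact hab (Subtype.ext (hα.symm.trans hβ))

end NumberFieldOfPolynomial

theorem eventually_not_dvd {n : ℕ} (hn : n ≠ 0) : ∀ᶠ p in atTop, ¬ p ∣ n :=
  (eventually_gt_atTop n).mono fun _ hp ↦ Nat.not_dvd_of_pos_of_lt hn.bot_lt hp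

/-- A monic irreducible integer polynomial of degree at least 2 has no root
modulo infinitely many primes. -/
theorem irreducible_rootless_mod_infinitely_many_primes (f : Polynomial ℤ)
    (hmon : f.Monic) (hirr : Irreducible f) (hdeg : 2 ≤ f.natDegree) :
    {p : ℕ | p.Prime ∧ ∀ x : ZMod p, (f.map (Int.castRingHom (ZMod p))).eval x ≠ 0}.Infinite := by
  obtain ⟨K, _, _, θ, rfl, hθ⟩ := exists_minpoly_eq_and_exponent_ne_zero hmon hirr
  have hsep := (hmon.irreducible_iff_irreducible_map_fraction_map (K := ℚ).1 hirr).separable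
  obtain ⟨L, _, _, α, β, hαβ, hα, hβ⟩ := exists_ne_and_aeval_eq_zero hmon hsep hdeg
  have hdiff : Ideal.absNorm (Ideal.span {α - β}) ≠ 0 := by
    simpa [Ideal.absNorm_eq_zero_iff, sub_eq_zero] using hαβ
  have hK : ∃ᶠ p in atTop, p.Prime ∧ primeIdealCount K p = 0 := by
    refine frequently_primeIdealCount_eq_zero K L ?_
    filter_upwards [eventually_not_dvd hθ, eventually_not_dvd hdiff] with p hpθ hpdiff hp hpL
    have := Fact.mk hp
    exact (two_le_natCard_isRoot_of_primeIdealCount_ne_zero hα hβ hpdiff hpL).trans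
      (natCard_isRoot_le_primeIdealCount hpθ)
  refine Nat.frequently_atTop_iff_infinite.1 ((hK.and_eventually (eventually_not_dvd hθ)).mono ?_)
  rintro p ⟨⟨hp, hpK⟩, hpθ⟩
  refine ⟨hp, fun x hx ↦ ?_⟩
  have := Fact.mk hp
  have hle := natCard_isRoot_le_primeIdealCount hpθ
  rw [hpK, Nat.le_zero, Finite.card_eq_zero_iff] at hle
  exact hle.false ⟨x, hx⟩
end

section
/- Let p be a prime and let ℓ_1, ..., ℓ_n be distinct primes. Then [ℚ(ℓ_1^{1/p}, ..., ℓ_n^{1/p}) : ℚ] = p^n. -/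
open IntermediateField

/-!
Let `F` be a subfield of an ordered field `E` and let `x ∈ E` have degree `k` over `F` and satisfy
`x ^ m ∈ F`. The norm of `x` from `F(x)` to `F` has the same `m`-th power as `x ^ k`, hence equals
`± x ^ k`, so `x ^ k ∈ F` and the minimal polynomial of `x` is `X ^ k - x ^ k`. In particular `x`
has trace zero as soon as `x ∉ F`. If such radicals `x i` have pairwise ratios outside `F`, dividing
a linear relation by one of them and taking traces kills all its other terms, so the `x i` are
linearly independent. Over `ℚ`, unique factorization shows that the monomials
`∏ i, (ℓ i) ^ (e i / m)` with `0 ≤ e i < m` have irrational pairwise ratios, and they span the field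
in question.
-/

theorem isIntegral_of_pow_mem_bot {F E : Type*} [Field F] [Field E] [Algebra F E] {m : ℕ} {x : E}
    (hm : m ≠ 0) (hx : x ^ m ∈ (⊥ : IntermediateField F E)) : IsIntegral F x := by
  obtain ⟨c, hc⟩ := mem_bot.1 hx
  exact .of_pow hm.bot_lt (hc ▸ isIntegral_algebraMap)

section OrderedField

variable {F E : Type*} [Field F] [Field E] [LinearOrder E] [IsStrictOrderedRing E] [Algebra F E]
  {m : ℕ} {x : E}

theorem pow_natDegree_minpoly_mem_bot (hm : m ≠ 0) (hx : x ^ m ∈ (⊥ : IntermediateField F E)) :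
    x ^ (minpoly F x).natDegree ∈ (⊥ : IntermediateField F E) := by
  obtain ⟨c, hc⟩ := mem_bot.1 hx
  set k := (minpoly F x).natDegree
  let N := Algebra.norm F (AdjoinSimple.gen F x)
  have norm_pow : N ^ m = c ^ k := by
    have gen_pow : AdjoinSimple.gen F x ^ m = algebraMap F F⟮x⟯ c := Subtype.ext hc.symm
    rw [← map_pow, gen_pow, Algebra.norm_algebraMap,
      adjoin.finrank (isIntegral_of_pow_mem_bot hm hx)]
  have pow_eq : (x ^ k) ^ m = algebraMap F E N ^ m := by
    rw [← map_pow, norm_pow, map_pow, hc, pow_right_comm]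
  obtain h | ⟨h, -⟩ := (pow_eq_pow_iff_of_ne_zero hm).1 pow_eq
  · exact h ▸ IntermediateField.algebraMap_mem _ N
  · exact h ▸ neg_mem (IntermediateField.algebraMap_mem _ N)

theorem exists_minpoly_eq_X_pow_sub_C_of_pow_mem_bot (hm : m ≠ 0)
    (hx : x ^ m ∈ (⊥ : IntermediateField F E)) :
    ∃ c : F, minpoly F x = .X ^ (minpoly F x).natDegree - .C c := by
  obtain ⟨c, hc⟩ := mem_bot.1 (pow_natDegree_minpoly_mem_bot hm hx)
  have hint := isIntegral_of_pow_mem_bot hm hx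
  refine ⟨c, (Polynomial.eq_of_monic_of_dvd_of_natDegree_le (minpoly.monic hint)
    (Polynomial.monic_X_pow_sub_C c (minpoly.natDegree_pos hint).ne')
    (minpoly.dvd F x ?_) ?_).symm⟩
  · simp [hc]
  · rw [Polynomial.natDegree_X_pow_sub_C]

theorem nextCoeff_minpoly_eq_zero_of_pow_mem_bot (hm : m ≠ 0)
    (hx : x ^ m ∈ (⊥ : IntermediateField F E)) (hx' : x ∉ (⊥ : IntermediateField F E)) :
    (minpoly F x).nextCoeff = 0 := by
  have two_le : 2 ≤ (minpoly F x).natDegree := by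
    have pos := minpoly.natDegree_pos (isIntegral_of_pow_mem_bot hm hx)
    have ne_one : (minpoly F x).natDegree ≠ 1 := mt minpoly.natDegree_eq_one_iff.1 hx'
    omega
  obtain ⟨c, hc⟩ := exists_minpoly_eq_X_pow_sub_C_of_pow_mem_bot hm hx
  rw [Polynomial.nextCoeff_of_natDegree_pos (by omega), hc, Polynomial.natDegree_X_pow_sub_C,
    Polynomial.coeff_sub, Polynomial.coeff_X_pow, Polynomial.coeff_C, if_neg (by omega),
    if_neg (by omega), sub_zero]

theorem normalizedTrace_eq_zero_of_pow_mem_bot [CharZero F] {L : IntermediateField F E}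
    [Algebra.IsIntegral F L] {x : L} (hm : m ≠ 0)
    (hx : (x : E) ^ m ∈ (⊥ : IntermediateField F E))
    (hx' : (x : E) ∉ (⊥ : IntermediateField F E)) : Algebra.normalizedTrace F L x = 0 := by
  rw [Algebra.normalizedTrace_minpoly, minpoly_eq,
    nextCoeff_minpoly_eq_zero_of_pow_mem_bot hm hx hx', neg_zero, smul_zero]

theorem linearIndependent_of_pow_mem_bot {ι : Type*} {x : ι → E} (hm : m ≠ 0)
    (hx₀ : ∀ i, x i ≠ 0) (hx : ∀ i, x i ^ m ∈ (⊥ : IntermediateField F E))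
    (hdiv : Pairwise fun i j ↦ x i / x j ∉ (⊥ : IntermediateField F E)) :
    LinearIndependent F x := by
  have : CharZero F := (algebraMap F E).charZero
  let L := algebraicClosure F E
  let y (i : ι) : L := ⟨x i, mem_algebraicClosure_iff'.2 (isIntegral_of_pow_mem_bot hm (hx i))⟩
  have hy₀ (i : ι) : y i ≠ 0 := fun h ↦ hx₀ i (congrArg Subtype.val h)
  let φ (i : ι) : Module.Dual F L :=
    Algebra.normalizedTrace F L ∘ₗ LinearMap.mulRight F (y i)⁻¹
  have φ_apply (i j : ι) : φ i (y j) = Algebra.normalizedTrace F L (y j / y i) := by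
    simp [φ, div_eq_mul_inv]
  have φ_of_ne : Pairwise fun i j ↦ φ i (y j) = 0 := fun i j hij ↦ by
    have pow_mem : (x j / x i) ^ m ∈ (⊥ : IntermediateField F E) :=
      div_pow (x j) (x i) m ▸ div_mem (hx j) (hx i)
    exact (φ_apply i j).trans (normalizedTrace_eq_zero_of_pow_mem_bot hm pow_mem (hdiv hij.symm))
  have φ_self (i : ι) : φ i (y i) = 1 := by
    rw [φ_apply, div_self (hy₀ i), ← map_one (algebraMap F L),
      Algebra.normalizedTrace_algebraMap_apply_eq_self]
  exact (LinearIndependent.of_pairwise_dual_eq_zero_one y φ φ_of_ne φ_self).map'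
    L.val.toLinearMap (LinearMap.ker_eq_bot.2 L.val.injective)

end OrderedField

section ReducedMonomial

variable {ι : Type*} [Fintype ι] {m : ℕ}

/-- The monomial `∏ i, a i ^ e i` with all exponents reduced modulo `m`. When the `m`-th powers of
the `a i` are scalars, these `m ^ #ι` monomials span the algebra generated by the `a i`. -/
def reducedMonomial {M : Type*} [CommMonoid M] (a : ι → M) (e : ι → Fin m) : M :=
  ∏ i, a i ^ (e i : ℕ)

variable {F E : Type*} [Field F] [Field E] [Algebra F E] {a : ι → E}

theorem reducedMonomial_pow_mem_bot (ha : ∀ i, a i ^ m ∈ (⊥ : IntermediateField F E))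
    (e : ι → Fin m) : reducedMonomial a e ^ m ∈ (⊥ : IntermediateField F E) := by
  rw [reducedMonomial, ← Finset.prod_pow]
  exact prod_mem fun i _ ↦ pow_right_comm (a i) _ _ ▸ pow_mem (ha i) _

theorem reducedMonomial_div (ha₀ : ∀ i, a i ≠ 0) (e e' : ι → Fin m) :
    reducedMonomial a e / reducedMonomial a e' = ∏ i, a i ^ ((e i : ℤ) - (e' i : ℤ)) := by
  simp only [reducedMonomial, ← Finset.prod_div_distrib, zpow_sub₀ (ha₀ _), zpow_natCast]

theorem prod_pow_mem_span_reducedMonomial (hm : m ≠ 0)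
    (ha : ∀ i, a i ^ m ∈ (⊥ : IntermediateField F E)) (k : ι → ℕ) :
    ∏ i, a i ^ k i ∈
      Submodule.span F (Set.range (reducedMonomial a : (ι → Fin m) → E)) := by
  let r (i : ι) : Fin m := ⟨k i % m, Nat.mod_lt _ hm.bot_lt⟩
  have split : ∏ i, a i ^ k i = (∏ i, (a i ^ m) ^ (k i / m)) * reducedMonomial a r := by
    simp only [reducedMonomial, r, ← Finset.prod_mul_distrib, ← pow_mul, ← pow_add,
      Nat.div_add_mod]
  have scalar : ∏ i, (a i ^ m) ^ (k i / m) ∈ (⊥ : IntermediateField F E) :=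
    prod_mem fun i _ ↦ pow_mem (ha i) _
  obtain ⟨c, hc⟩ := mem_bot.1 scalar
  rw [split, ← hc, ← Algebra.smul_def]
  exact Submodule.smul_mem _ c (Submodule.subset_span ⟨r, rfl⟩)

theorem span_reducedMonomial_eq_adjoin (hm : m ≠ 0)
    (ha : ∀ i, a i ^ m ∈ (⊥ : IntermediateField F E)) :
    Submodule.span F (Set.range (reducedMonomial a : (ι → Fin m) → E)) =
      Subalgebra.toSubmodule (adjoin F (Set.range a)).toSubalgebra := by
  have halg : ∀ x ∈ Set.range a, IsAlgebraic F x := by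
    rintro _ ⟨i, rfl⟩
    exact (isIntegral_of_pow_mem_bot hm (ha i)).isAlgebraic
  rw [adjoin_toSubalgebra_of_isAlgebraic halg, Algebra.adjoin_eq_span]
  apply le_antisymm
  · apply Submodule.span_mono
    rintro _ ⟨e, rfl⟩
    exact Submonoid.mem_closure_range_iff_of_fintype.2 ⟨fun i ↦ e i, rfl⟩
  · rw [Submodule.span_le]
    intro x hx
    obtain ⟨k, rfl⟩ := Submonoid.mem_closure_range_iff_of_fintype.1 hx
    exact prod_pow_mem_span_reducedMonomial hm ha k

variable [LinearOrder E] [IsStrictOrderedRing E]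

theorem linearIndependent_reducedMonomial (hm : m ≠ 0) (ha₀ : ∀ i, a i ≠ 0)
    (ha : ∀ i, a i ^ m ∈ (⊥ : IntermediateField F E))
    (hdvd : ∀ e : ι → ℤ, ∏ i, a i ^ e i ∈ (⊥ : IntermediateField F E) → ∀ i, (m : ℤ) ∣ e i) :
    LinearIndependent F (reducedMonomial a : (ι → Fin m) → E) := by
  refine linearIndependent_of_pow_mem_bot hm
    (fun e ↦ Finset.prod_ne_zero_iff.2 fun i _ ↦ pow_ne_zero _ (ha₀ i))
    (reducedMonomial_pow_mem_bot ha) fun e e' hne hmem ↦ hne (funext fun i ↦ ?_)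
  rw [reducedMonomial_div ha₀] at hmem
  have modEq : (e' i : ℕ) ≡ e i [MOD m] := Nat.modEq_iff_dvd.2 (hdvd _ hmem i)
  exact Fin.ext (modEq.eq_of_lt_of_lt (e' i).isLt (e i).isLt).symm

theorem finrank_adjoin_range_eq_pow_card (hm : m ≠ 0) (ha₀ : ∀ i, a i ≠ 0)
    (ha : ∀ i, a i ^ m ∈ (⊥ : IntermediateField F E))
    (hdvd : ∀ e : ι → ℤ, ∏ i, a i ^ e i ∈ (⊥ : IntermediateField F E) → ∀ i, (m : ℤ) ∣ e i) :
    Module.finrank F (adjoin F (Set.range a)) = m ^ Fintype.card ι := by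
  classical
  calc Module.finrank F (adjoin F (Set.range a))
      = Module.finrank F (Submodule.span F (Set.range (reducedMonomial a : (ι → Fin m) → E))) := by
        rw [span_reducedMonomial_eq_adjoin hm ha]; rfl
    _ = Fintype.card (ι → Fin m) :=
        finrank_span_eq_card (linearIndependent_reducedMonomial hm ha₀ ha hdvd)
    _ = m ^ Fintype.card ι := by rw [Fintype.card_fun, Fintype.card_fin]

end ReducedMonomial

section Primes

theorem padicValRat_prod {ι : Type*} (p : ℕ) [Fact p.Prime] (s : Finset ι) {f : ι → ℚ}
    (hf : ∀ i ∈ s, f i ≠ 0) : padicValRat p (∏ i ∈ s, f i) = ∑ i ∈ s, padicValRat p (f i) := by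
  induction s using Finset.cons_induction with
  | empty => simp
  | cons i s hi ih =>
    obtain ⟨hfi, hfs⟩ := Finset.forall_mem_cons hi _ |>.1 hf
    rw [Finset.prod_cons, Finset.sum_cons, padicValRat.mul hfi (Finset.prod_ne_zero_iff.2 hfs),
      ih hfs]

variable {ι : Type*} [Fintype ι] {ℓ : ι → ℕ} {m : ℕ}

theorem padicValRat_prod_prime_zpow (hℓ : ∀ i, (ℓ i).Prime) (hinj : Function.Injective ℓ)
    (e : ι → ℤ) (i : ι) : padicValRat (ℓ i) (∏ j, (ℓ j : ℚ) ^ e j) = e i := by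
  have := fun j ↦ Fact.mk (hℓ j)
  rw [padicValRat_prod _ _ fun j _ ↦ zpow_ne_zero _ (Nat.cast_ne_zero.2 (hℓ j).ne_zero),
    Finset.sum_eq_single_of_mem i (Finset.mem_univ i)]
  · rw [padicValRat.zpow, padicValRat.self (hℓ i).one_lt, mul_one]
  · intro j _ hji
    rw [padicValRat.zpow, padicValRat.of_nat, padicValNat_primes (hinj.ne hji.symm),
      Nat.cast_zero, mul_zero]

theorem dvd_of_prod_prime_zpow_eq_pow (hℓ : ∀ i, (ℓ i).Prime) (hinj : Function.Injective ℓ)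
    {e : ι → ℤ} {q : ℚ} (h : ∏ i, (ℓ i : ℚ) ^ e i = q ^ m) (i : ι) : (m : ℤ) ∣ e i := by
  have := Fact.mk (hℓ i)
  rw [← padicValRat_prod_prime_zpow hℓ hinj e i, h, padicValRat.pow]
  exact dvd_mul_right _ _

theorem finrank_adjoin_range_of_pow_eq_prime {E : Type*} [Field E] [LinearOrder E]
    [IsStrictOrderedRing E] {a : ι → E} (hm : m ≠ 0) (ha : ∀ i, a i ^ m = ℓ i)
    (hℓ : ∀ i, (ℓ i).Prime) (hinj : Function.Injective ℓ) :
    Module.finrank ℚ (adjoin ℚ (Set.range a)) = m ^ Fintype.card ι := by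
  refine finrank_adjoin_range_eq_pow_card hm (fun i h ↦ ?_) (fun i ↦ ?_) fun e he ↦ ?_
  · exact (hℓ i).ne_zero (by simpa [h, hm] using (ha i).symm)
  · exact ha i ▸ IntermediateField.natCast_mem _ (ℓ i)
  · obtain ⟨q, hq⟩ := mem_bot.1 he
    have pow_eq : ((∏ i, (ℓ i : ℚ) ^ e i : ℚ) : E) = (q ^ m : ℚ) := by
      push_cast
      rw [← eq_ratCast (algebraMap ℚ E), hq, ← Finset.prod_pow]
      simp only [← ha, ← zpow_natCast, zpow_comm]
    exact dvd_of_prod_prime_zpow_eq_pow hℓ hinj (Rat.cast_injective pow_eq)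

end Primes

theorem finrank_adjoin_range_algHom_comp {F E K ι : Type*} [Field F] [Field E] [Field K]
    [Algebra F E] [Algebra F K] (f : E →ₐ[F] K) (a : ι → E) :
    Module.finrank F (adjoin F (Set.range (f ∘ a))) =
      Module.finrank F (adjoin F (Set.range a)) := by
  rw [Set.range_comp, ← adjoin_map]
  exact ((adjoin F (Set.range a)).equivMap f).toLinearEquiv.finrank_eq.symm

theorem degree_adjoin_pth_roots_general {ι : Type*} [Fintype ι] {m : ℕ} (hm : m ≠ 0) {ℓ : ι → ℕ}
    (hℓ : ∀ i, (ℓ i).Prime) (hinj : Function.Injective ℓ) :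
    Module.finrank ℚ
      (adjoin ℚ (Set.range fun i ↦ (((ℓ i : ℝ) ^ ((m : ℝ)⁻¹) : ℝ) : ℂ))) =
        m ^ Fintype.card ι := by
  let a (i : ι) : ℝ := (ℓ i : ℝ) ^ ((m : ℝ)⁻¹)
  have ha (i : ι) : a i ^ m = ℓ i := Real.rpow_inv_natCast_pow (Nat.cast_nonneg _) hm
  exact (finrank_adjoin_range_algHom_comp (Complex.ofRealAm.restrictScalars ℚ) a).trans
    (finrank_adjoin_range_of_pow_eq_prime hm ha hℓ hinj)

/-- Besicovitch: the `p`-th roots of `n` distinct primes generate an extension of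
`ℚ` of degree `p^n`. -/
theorem degree_adjoin_pth_roots (p : ℕ) (hp : p.Prime) (n : ℕ)
    (ℓ : Fin n → ℕ) (hℓ : ∀ i, (ℓ i).Prime) (hinj : Function.Injective ℓ) :
    Module.finrank ℚ
      (IntermediateField.adjoin ℚ
        (Set.range fun i : Fin n => (((ℓ i : ℝ) ^ ((p : ℝ)⁻¹) : ℝ) : ℂ))) = p ^ n := by
  simpa using degree_adjoin_pth_roots_general hp.ne_zero hℓ hinj
end
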